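/- arXiv:1309.7842 — 5 statements merged into one kernel-verified Lean document; each statement's English description precedes it below -/
import Mathlib

section
/- Let p be an odd prime and n ≥ 2. Let L be a finite field with |L| = p^n and K = 𝔽_p. If f : L∖{0} → K is difference balanced and balanced, then f is two-tuple balanced. -/
/-- A function `f : L∖{0} → K` is balanced. -/
def IsBalanced {K L : Type*} [Field K] [Field L] (q n : ℕ) (f : L → K) : Prop :=
  Nat.card {x : L | x ≠ 0 ∧ f x = 0} = q ^ (n - 1) - 1 ∧
    ∀ b : K, b ≠ 0 → Nat.card {x : L | x ≠ 0 ∧ f x = b} = q ^ (n - 1)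

/-- A function `f : L∖{0} → K` is difference balanced. -/
def IsDiffBalanced {K L : Type*} [Field K] [Field L] (q n : ℕ) (f : L → K) : Prop :=
  ∀ a : L, a ≠ 0 → a ≠ 1 → IsBalanced q n (fun x => f (a * x) - f x)

/-- `f` is `d`-homogeneous: `gcd(d, q−1) = 1` and `f(cx) = c^d f(x)` for all
`c ∈ K∖{0}` and `x ∈ L∖{0}`. -/
def IsDHomogeneous {K L : Type*} [Field K] [Field L] [Algebra K L] (q d : ℕ)
    (f : L → K) : Prop :=
  Nat.Coprime d (q - 1) ∧
    ∀ c : K, c ≠ 0 → ∀ x : L, x ≠ 0 → f (algebraMap K L c * x) = c ^ d * f x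

/-- `N_{b₁,b₂}(a) = |{x ∈ L∖{0} : f(x) = b₁ and f(ax) = b₂}|`. -/
noncomputable def Ntt {K L : Type*} [Field K] [Field L] (f : L → K) (a : L) (b₁ b₂ : K) : ℕ :=
  Nat.card {x : L | x ≠ 0 ∧ f x = b₁ ∧ f (a * x) = b₂}

/-- `f` is two-tuple balanced. -/
def IsTwoTupleBalanced {K L : Type*} [Field K] [Field L] [Algebra K L] (q n : ℕ)
    (f : L → K) : Prop :=
  (∀ a : L, a ≠ 0 → (∀ c : K, algebraMap K L c ≠ a) →
      (Ntt f a 0 0 = q ^ (n - 2) - 1 ∧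
        ∀ b₁ b₂ : K, ¬(b₁ = 0 ∧ b₂ = 0) → Ntt f a b₁ b₂ = q ^ (n - 2))) ∧
  (∀ c : K, c ≠ 0 → ∃ μ : K,
      (∀ x : L, x ≠ 0 → f (algebraMap K L c * x) = μ * f x) ∧
      Ntt f (algebraMap K L c) 0 0 = q ^ (n - 1) - 1 ∧
      (∀ b₁ : K, b₁ ≠ 0 → Ntt f (algebraMap K L c) b₁ (μ * b₁) = q ^ (n - 1)) ∧
      (∀ b₁ b₂ : K, b₂ ≠ μ * b₁ → Ntt f (algebraMap K L c) b₁ b₂ = 0))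

/-- An automorphism acting trivially modulo every prime above `q` preserves, up to units, the
divisors of powers of `q`. -/
theorem RingEquiv.associated_apply_of_mul_eq_pow {O : Type*} [CommRing O] [IsDedekindDomain O]
    (σ : O ≃+* O) {q a b : O} {k : ℕ}
    (hσ : ∀ P : Ideal O, P.IsPrime → q ∈ P → ∀ x, σ x - x ∈ P) (hab : a * b = q ^ k) :
    Associated (σ a) a := by
  have key : ∀ I : Ideal O, I ∣ Ideal.span {q ^ k} → I.map σ = I := by
    intro I
    induction I using UniqueFactorizationMonoid.induction_on_prime with
    | h₁ => intro _; exact Ideal.map_bot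
    | h₂ I hI =>
      intro _
      rw [Ideal.isUnit_iff.1 hI, Ideal.map_top]
    | h₃ I P hI hP ih =>
      intro hd
      rw [Ideal.map_mul, ih ((Dvd.intro_left _ rfl).trans hd)]
      congr 1
      have hP' : P.IsPrime := Ideal.isPrime_of_prime hP
      have hqP : q ∈ P := by
        have h1 : Ideal.span {q ^ k} ≤ P := Ideal.le_of_dvd ((Dvd.intro _ rfl).trans hd)
        exact hP'.mem_of_pow_mem k (h1 (Ideal.mem_span_singleton_self _))
      apply le_antisymm
      · rw [Ideal.map_le_iff_le_comap]
        intro x hx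
        have := P.add_mem (hσ P hP' hqP x) hx
        simpa using this
      · intro x hx
        have := P.sub_mem hx (hσ P hP' hqP (σ.symm x))
        have h2 : σ.symm x ∈ P := by simpa using this
        simpa using Ideal.mem_map_of_mem σ h2
  have h := key (Ideal.span {a}) (by
    rw [Ideal.dvd_span_singleton, ← hab]
    exact Ideal.mul_mem_right _ _ (Ideal.mem_span_singleton_self _))
  rw [Ideal.map_span, Set.image_singleton] at h
  exact Ideal.span_singleton_eq_span_singleton.1 h

theorem Ideal.sub_one_mem_of_pow_prime_eq_one {O : Type*} [CommRing O] {p : ℕ} (hp : p.Prime)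
    {ζ : O} (hζ : ζ ^ p = 1) {P : Ideal O} (hP : P.IsPrime) (h : (p : O) ∈ P) : ζ - 1 ∈ P := by
  obtain ⟨r, hr⟩ := exists_add_pow_prime_eq hp (ζ - 1) 1
  refine hP.mem_of_pow_mem p ?_
  have : (ζ - 1) ^ p = - (p * ((ζ - 1) * 1 * r)) := by
    have h' : ζ - 1 + 1 = ζ := by ring
    rw [h', hζ] at hr
    linear_combination -hr
  rw [this]
  exact P.neg_mem (P.mul_mem_right _ h)

open NumberField in
/-- The automorphism of `ℤ[ζ_{Np}]` fixing `ζ_N` and sending `ζ_p` to `ζ_p ^ t` is the identity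
modulo `ζ_p - 1`. -/
theorem NumberField.exists_ringEquiv_cyclotomic_inertia {N p : ℕ} [NeZero (N * p)]
    (hNp : N.Coprime p) {E : Type*} [Field E] [NumberField E] [IsCyclotomicExtension {N * p} ℚ E]
    {η : 𝓞 E} (hη : IsPrimitiveRoot η (N * p)) {t : ℕ} (ht : t.Coprime p) :
    ∃ σ : 𝓞 E ≃+* 𝓞 E, (∀ x, x ^ p = 1 → σ x = x ^ t) ∧ (∀ x, x ^ N = 1 → σ x = x) ∧
      ∀ x, η ^ N - 1 ∣ σ x - x := by
  obtain ⟨s, hs1, hst⟩ := Nat.chineseRemainder hNp 1 t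
  have hs : s.Coprime (N * p) := by
    refine Nat.Coprime.mul_right ?_ ?_
    · rw [Nat.Coprime, hs1.gcd_eq]; simp
    · rw [Nat.Coprime, hst.gcd_eq]; exact ht
  let u : (ZMod (N * p))ˣ := ZMod.unitOfCoprime s hs
  let τ := (IsCyclotomicExtension.Rat.galEquivZMod (N * p) E).symm u
  let σ : 𝓞 E ≃+* 𝓞 E := RingOfIntegers.mapRingEquiv τ.toRingEquiv
  have hσ : ∀ x : 𝓞 E, x ^ (N * p) = 1 → σ x = x ^ s := by
    intro x hx
    apply RingOfIntegers.ext
    have hx' : (x : E) ^ (N * p) = 1 := by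
      rw [← map_pow, hx, map_one]
    have := IsCyclotomicExtension.Rat.galEquivZMod_apply_of_pow_eq (N * p) E τ hx'
    have h2 : (IsCyclotomicExtension.Rat.galEquivZMod (N * p) E) τ = u :=
      MulEquiv.apply_symm_apply _ _
    rw [h2] at this
    rw [RingOfIntegers.mapRingEquiv_apply]
    refine this.trans ?_
    rw [ZMod.coe_unitOfCoprime, ZMod.val_natCast, ← pow_eq_pow_mod _ hx']
    exact (map_pow (algebraMap (𝓞 E) E) x s).symm
  refine ⟨σ, ?_, ?_, ?_⟩
  · intro x hx
    rw [hσ x (by rw [mul_comm, pow_mul, hx, one_pow]), pow_eq_pow_mod s hx, hst,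
      ← pow_eq_pow_mod t hx]
  · intro x hx
    rw [hσ x (by rw [pow_mul, hx, one_pow]), pow_eq_pow_mod s hx, hs1,
      ← pow_eq_pow_mod 1 hx, pow_one]
  · intro x
    have hη' : IsPrimitiveRoot (η : E) (N * p) :=
      hη.map_of_injective RingOfIntegers.coe_injective
    have hx : x ∈ Algebra.adjoin ℤ {η} := by
      have := IsCyclotomicExtension.Rat.adjoin_singleton_eq_top hη'
      have h3 : hη'.toInteger = η := rfl
      rw [h3] at this
      rw [this]; trivial
    induction hx using Algebra.adjoin_induction with
    | mem x hx =>
      obtain rfl : x = η := hx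
      rw [hσ _ hη.pow_eq_one]
      have hs0 : s ≠ 0 ∨ N = 1 := by
        by_cases h : s = 0
        · subst h; right; exact Nat.dvd_one.1 ((Nat.modEq_zero_iff_dvd).1 hs1.symm)
        · exact Or.inl h
      rcases hs0 with hs0 | rfl
      · obtain ⟨k, hk⟩ := (Nat.modEq_iff_dvd' (Nat.one_le_iff_ne_zero.2 hs0)).1 hs1.symm
        have : s = N * k + 1 := by omega
        rw [this, pow_succ, pow_mul, ← sub_one_mul]
        exact (sub_one_dvd_pow_sub_one _ _).mul_right _
      · have : x ^ s - x = (x ^ s - 1) - (x - 1) := by ring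
        rw [this, pow_one]
        exact dvd_sub (sub_one_dvd_pow_sub_one _ _) dvd_rfl
    | algebraMap r => simp
    | add x y _ _ hx hy =>
      have : σ (x + y) - (x + y) = (σ x - x) + (σ y - y) := by rw [map_add]; ring
      rw [this]; exact dvd_add hx hy
    | mul x y _ _ hx hy =>
      have : σ (x * y) - (x * y) = (σ x - x) * σ y + x * (σ y - y) := by rw [map_mul]; ring
      rw [this]; exact dvd_add (hx.mul_right _) (hy.mul_left _)

open NumberField Polynomial in
theorem NumberField.dvd_coeff_sub_of_dvd_sum_root_pow {p : ℕ} (hp : p.Prime) {E : Type*} [Field E]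
    [NumberField E] {ζ : 𝓞 E} (hζ : IsPrimitiveRoot ζ p) (q : ℕ) (hq : q ≠ 0) (c : ℕ → ℤ)
    (h : (q : 𝓞 E) ∣ ∑ i ∈ Finset.range p, (c i : 𝓞 E) * ζ ^ i) {i j : ℕ} (hi : i < p)
    (hj : j < p) : (q : ℤ) ∣ c i - c j := by
  have := Fact.mk hp
  obtain ⟨β, hβ⟩ := h
  have hζE : IsPrimitiveRoot (ζ : E) p := hζ.map_of_injective RingOfIntegers.coe_injective
  let F := IntermediateField.adjoin ℚ {(ζ : E)}
  have : IsCyclotomicExtension {p} ℚ F :=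
    hζE.intermediateField_adjoin_isCyclotomicExtension ℚ
  let z : F := IntermediateField.AdjoinSimple.gen ℚ (ζ : E)
  have hzE : (z : E) = ζ := IntermediateField.AdjoinSimple.coe_gen ℚ (ζ : E)
  have hz : IsPrimitiveRoot z p := by
    refine IsPrimitiveRoot.of_map_of_injective (f := algebraMap F E) ?_ (algebraMap F E).injective
    have : algebraMap F E z = ζ := hzE
    rwa [this]
  let D : ℤ[X] := ∑ i ∈ Finset.range p, C (c i) * X ^ i
  have hD : ∀ k < p, D.coeff k = c k := by
    intro k hk
    simp [D, coeff_X_pow, hk]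
  let b : F := aeval z D / q
  have hbE : (b : E) = β := by
    have h1 : (((aeval z D : F)) : E) = q * β := by
      have := congrArg (algebraMap (𝓞 E) E) hβ
      simp only [map_sum, map_mul, map_pow, map_intCast, map_natCast] at this
      rw [← this]
      simp [D, hzE]
    have : (b : E) = ((aeval z D : F) : E) / q := by simp [b]
    rw [this, h1]
    field_simp
  have hb : IsIntegral ℤ b := by
    rw [← isIntegral_algebraMap_iff (algebraMap F E).injective]
    have : algebraMap F E b = β := hbE
    rw [this]
    exact RingOfIntegers.isIntegral_coe β
  obtain ⟨y, hy⟩ := (IsCyclotomicExtension.Rat.isIntegralClosure_adjoin_singleton_of_prime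
    hz).isIntegral_iff.1 hb
  have hyb : b ∈ Algebra.adjoin ℤ {z} := hy ▸ y.2
  obtain ⟨P, hP⟩ := Algebra.adjoin_singleton_eq_range_aeval ℤ z ▸ hyb
  have h0 : aeval z (D - C (q : ℤ) * P) = 0 := by
    have : aeval z P = b := hP
    simp only [map_sub, map_mul, this, b]
    simp
    field_simp
    simp
  have hdvd : cyclotomic p ℤ ∣ D - C (q : ℤ) * P := by
    rw [cyclotomic_eq_minpoly hz hp.pos]
    exact minpoly.isIntegrallyClosed_dvd (hz.isIntegral hp.pos) h0
  have hdvd' : cyclotomic p (ZMod q) ∣ D.map (Int.castRingHom (ZMod q)) := by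
    have := Polynomial.map_dvd (Int.castRingHom (ZMod q)) hdvd
    simpa using this
  obtain ⟨Q, hQ⟩ := hdvd'
  have hcoef : ∀ k < p, ((c k : ℤ) : ZMod q) = Q.coeff 0 := by
    intro k hk
    rcases subsingleton_or_nontrivial (ZMod q) with _ | _
    · exact Subsingleton.elim _ _
    have hDdeg : (D.map (Int.castRingHom (ZMod q))).natDegree ≤ p - 1 := by
      refine natDegree_map_le.trans (natDegree_sum_le_of_forall_le _ _ fun i hi => ?_)
      exact (natDegree_C_mul_X_pow_le _ _).trans (Nat.le_pred_of_lt (Finset.mem_range.1 hi))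
    have hQdeg : Q.natDegree = 0 := by
      by_cases hQ0 : Q = 0
      · simp [hQ0]
      · rw [hQ, (cyclotomic.monic p (ZMod q)).natDegree_mul' hQ0, natDegree_cyclotomic,
          Nat.totient_prime hp] at hDdeg
        omega
    have hk' : ((c k : ℤ) : ZMod q) = (D.map (Int.castRingHom (ZMod q))).coeff k := by
      simp [hD k hk]
    rw [hk', hQ, eq_C_of_natDegree_eq_zero hQdeg, coeff_mul_C, cyclotomic_prime]
    simp [coeff_X_pow, hk]
  have := (hcoef i hi).trans (hcoef j hj).symm
  exact (ZMod.intCast_eq_intCast_iff_dvd_sub _ _ _).1 this.symm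

theorem sum_addChar_comp_eq_neg_one {G O : Type*} [Fintype G] [CommRing O] [IsDomain O]
    {p : ℕ} [NeZero p] {ψ : AddChar (ZMod p) O} (hψ : ψ ≠ 1) {M : ℕ} {h : G → ZMod p}
    (hh : ∀ b, Fintype.card {x // h x = b} + (if b = 0 then 1 else 0) = M) :
    ∑ x, ψ (h x) = -1 := by
  classical
  have h1 : ∑ x, ψ (h x) = ∑ b, (Fintype.card {x // h x = b} : O) * ψ b := by
    rw [← Finset.sum_fiberwise Finset.univ h]
    refine Finset.sum_congr rfl fun b _ => ?_
    rw [Finset.sum_congr rfl (g := fun _ => ψ b) (fun x hx => by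
      rw [(Finset.mem_filter.1 hx).2])]
    simp [Fintype.card_subtype]
  have h2 : ∀ b, (Fintype.card {x // h x = b} : O) = M - (if b = 0 then 1 else 0) := by
    intro b
    rw [← hh b]; push_cast; ring
  simp_rw [h1, h2, sub_mul]
  rw [Finset.sum_sub_distrib, ← Finset.mul_sum, AddChar.sum_eq_zero_of_ne_one hψ]
  simp

theorem MonoidHom.sum_mul_sum_inv {G O : Type*} [CommGroup G] [Fintype G] [CommRing O]
    (χ : G →* Oˣ) (u v : G → O) :
    (∑ x, (χ x : O) * u x) * ∑ y, (χ y⁻¹ : O) * v y =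
      ∑ a, (χ a : O) * ∑ y, u (a * y) * v y := by
  simp_rw [Finset.mul_sum]
  rw [Finset.sum_comm]
  refine Finset.sum_congr rfl fun y _ => ?_
  rw [Finset.sum_mul]
  rw [← Equiv.sum_comp (Equiv.mulRight y)]
  refine Finset.sum_congr rfl fun a _ => ?_
  have : ((χ (a * y) : Oˣ) : O) * (χ y⁻¹ : Oˣ) = χ a := by
    rw [← Units.val_mul, ← map_mul, mul_inv_cancel_right]
  simp only [Equiv.coe_mulRight]
  linear_combination (u (a * y) * v y) * this

theorem dvd_card_mul_sub_sum_of_dvd_dual {G O : Type*} [CommGroup G] [Fintype G] [CommRing O]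
    [IsDomain O] [HasEnoughRootsOfUnity O (Monoid.exponent G)] {d : O} {e : G → O}
    (h : ∀ χ : G →* Oˣ, χ ≠ 1 → d ∣ ∑ b, (χ b : O) * e b) (a : G) :
    d ∣ Fintype.card G * e a - ∑ b, e b := by
  classical
  have := Fintype.ofFinite (G →* Oˣ)
  have horth : ∀ c : G, ∑ χ : G →* Oˣ, (χ c : O) = if c = 1 then (Fintype.card G : O) else 0 := by
    intro c
    have h1 := sum_hom_units ((Units.coeHom O).comp (MonoidHom.eval c : (G →* Oˣ) →* Oˣ))
    have h2 : (Units.coeHom O).comp (MonoidHom.eval c : (G →* Oˣ) →* Oˣ) = 1 ↔ c = 1 := by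
      rw [← CommGroup.forall_apply_eq_apply_iff G (M := O)]
      simp [DFunLike.ext_iff]
    have h3 : Fintype.card (G →* Oˣ) = Fintype.card G := by
      rw [← Nat.card_eq_fintype_card, ← Nat.card_eq_fintype_card,
        CommGroup.card_monoidHom_of_hasEnoughRootsOfUnity]
    rw [h3] at h1
    simp only [h2] at h1
    simpa using h1
  have hinv : ∑ χ : G →* Oˣ, (χ a⁻¹ : O) * ∑ b, (χ b : O) * e b = Fintype.card G * e a := by
    simp_rw [Finset.mul_sum]
    rw [Finset.sum_comm]
    have : ∀ b, ∑ χ : G →* Oˣ, (χ a⁻¹ : O) * ((χ b : O) * e b) =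
        if b = a then Fintype.card G * e b else 0 := by
      intro b
      have h4 := horth (a⁻¹ * b)
      rw [inv_mul_eq_one, eq_comm (a := a)] at h4
      rw [← ite_zero_mul, ← h4, Finset.sum_mul]
      refine Finset.sum_congr rfl fun χ _ => ?_
      rw [map_mul, Units.val_mul, mul_assoc]
    rw [Finset.sum_congr rfl fun b _ => this b]
    simp
  rw [← hinv, ← Finset.add_sum_erase _ _ (Finset.mem_univ (1 : G →* Oˣ))]
  simp only [MonoidHom.one_apply, Units.val_one, one_mul, add_sub_cancel_left]
  exact Finset.dvd_sum fun χ hχ => (h χ (Finset.ne_of_mem_erase hχ)).mul_left _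

theorem exists_eq_of_modEq_of_sum_eq {ι : Type*} [Fintype ι] {w : ι → ℕ} {q : ℕ}
    (hsum : ∑ i, w i = q) (hw : ∀ i j, (q : ℤ) ∣ (w i : ℤ) - w j) :
    (∃ i, w i = q) ∨ ∀ i, Fintype.card ι * w i = q := by
  classical
  have hle : ∀ i, w i ≤ q := fun i => hsum ▸ Finset.single_le_sum (by simp) (Finset.mem_univ i)
  by_cases h : ∀ i j, w i ≤ w j
  · right
    intro i
    rw [← hsum, Finset.sum_congr rfl (fun j _ => le_antisymm (h j i) (h i j))]
    simp
  · left
    push Not at h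
    obtain ⟨i, j, hij⟩ := h
    refine ⟨i, le_antisymm (hle i) ?_⟩
    have := Int.le_of_dvd (by omega) (hw i j)
    omega

/-- Multiplier theorem: a balanced, difference balanced function on an abelian group of order
`p ^ n - 1` is carried to any of its nonzero scalar multiples by a translation. -/
theorem exists_forall_mul_eq_apply_mul {G : Type*} [CommGroup G] [Fintype G] {p n : ℕ}
    (hp : p.Prime) (hn : n ≠ 0) (hG : Fintype.card G + 1 = p ^ n) {f : G → ZMod p}
    (hf : ∀ b, Fintype.card {x // f x = b} + (if b = 0 then 1 else 0) = p ^ (n - 1))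
    (hdf : ∀ a, a ≠ 1 → ∀ b, Fintype.card {x // f (a * x) - f x = b} +
      (if b = 0 then 1 else 0) = p ^ (n - 1))
    {t : ZMod p} (ht : t ≠ 0) : ∃ a, ∀ x, t * f (a * x) = f x := by
  classical
  have := Fact.mk hp
  set N := Fintype.card G with hN
  have hN0 : N ≠ 0 := Fintype.card_ne_zero
  have : NeZero (N * p) := ⟨mul_ne_zero hN0 hp.ne_zero⟩
  have hNp : N.Coprime p := by
    refine Nat.Coprime.symm ((Nat.Prime.coprime_iff_not_dvd hp).2 fun h => ?_)
    have h1 : p ∣ N + 1 := hG ▸ dvd_pow_self p hn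
    exact hp.one_lt.ne' (Nat.dvd_one.1 ((Nat.dvd_add_right h).1 h1))
  let E := CyclotomicField (N * p) ℚ
  have : IsCyclotomicExtension {N * p} ℚ E := CyclotomicField.isCyclotomicExtension (N * p) ℚ
  let O := NumberField.RingOfIntegers E
  let η : O := (IsCyclotomicExtension.zeta_spec (N * p) ℚ E).toInteger
  have hη : IsPrimitiveRoot η (N * p) :=
    (IsCyclotomicExtension.zeta_spec (N * p) ℚ E).toInteger_isPrimitiveRoot
  have hζ : IsPrimitiveRoot (η ^ N) p := hη.pow (NeZero.pos _) rfl
  have hω : IsPrimitiveRoot (η ^ p) N := hη.pow (NeZero.pos _) (mul_comm _ _)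
  have : NeZero N := ⟨hN0⟩
  have hrootsN : HasEnoughRootsOfUnity O N := ⟨⟨_, hω⟩, rootsOfUnity.isCyclic O N⟩
  have hroots : HasEnoughRootsOfUnity O (Monoid.exponent G) :=
    HasEnoughRootsOfUnity.of_dvd O (Group.exponent_dvd_card (G := G))
  obtain ⟨σ, hσp, hσN, hσ⟩ := NumberField.exists_ringEquiv_cyclotomic_inertia hNp hη
    (t := t.val) ((ZMod.isUnit_iff_coprime t.val p).1 (by simpa using ht))
  let ψ : AddChar (ZMod p) O := AddChar.zmodChar p hζ.pow_eq_one
  have hψ : ∀ b, ψ b = (η ^ N) ^ b.val := fun b => AddChar.zmodChar_apply _ b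
  have hψ1 : ψ ≠ 1 := by
    simpa using (AddChar.zmodChar_primitive_of_primitive_root p hζ) one_ne_zero
  have hσψ : ∀ b, σ (ψ b) = ψ (t * b) := by
    intro b
    rw [hσp _ (by rw [← AddChar.map_nsmul_eq_pow]; simp), ← AddChar.map_nsmul_eq_pow]
    simp
  -- the correlation of `t • f` with `f`
  let e : ZMod p → G → O := fun s a => ∑ y, ψ (s * f (a * y)) * ψ (-f y)
  have hprod : ∀ (s : ZMod p) (χ : G →* Oˣ), (∑ x, (χ x : O) * ψ (s * f x)) *
      ∑ y, (χ y⁻¹ : O) * ψ (-f y) = ∑ a, (χ a : O) * e s a :=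
    fun s χ => χ.sum_mul_sum_inv (fun x => ψ (s * f x)) (fun y => ψ (-f y))
  have he1 : ∀ a, e 1 a = if a = 1 then (N : O) else -1 := by
    intro a
    have h1 : e 1 a = ∑ y, ψ (f (a * y) - f y) := by
      simp [e, sub_eq_add_neg, AddChar.map_add_eq_mul]
    rw [h1]
    split_ifs with ha
    · simp [ha, hN]
    · exact sum_addChar_comp_eq_neg_one hψ1 (hdf a ha)
  have hsum : ∀ s : ZMod p, s ≠ 0 → ∑ x, ψ (s * f x) = -1 := by
    intro s hs
    have h1 : AddChar.mulShift ψ s ≠ 1 :=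
      (AddChar.zmodChar_primitive_of_primitive_root p hζ) hs
    simpa using sum_addChar_comp_eq_neg_one h1 hf
  have hpn : (p : O) ^ n = N + 1 := by rw [← Nat.cast_pow, ← hG]; simp
  have hnorm : ∀ χ : G →* Oˣ, χ ≠ 1 → (∑ x, (χ x : O) * ψ (1 * f x)) *
      ∑ y, (χ y⁻¹ : O) * ψ (-f y) = (p : O) ^ n := by
    intro χ hχ
    have h0 : ∑ a, (χ a : O) = 0 := by
      have h1 := sum_hom_units ((Units.coeHom O).comp χ)
      rw [if_neg] at h1
      · simpa using h1
      · intro h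
        refine hχ (MonoidHom.ext fun x => Units.ext ?_)
        simpa using DFunLike.congr_fun h x
    have h2 : ∀ a, (χ a : O) * e 1 a = (if a = 1 then (N + 1 : O) else 0) - χ a := by
      intro a
      rw [he1]
      split_ifs with ha
      · simp [ha]
      · rw [mul_neg_one, zero_sub]
    rw [hprod, Finset.sum_congr rfl fun a _ => h2 a, Finset.sum_sub_distrib, h0, hpn]
    simp
  have hdvdχ : ∀ χ : G →* Oˣ, χ ≠ 1 → (p : O) ^ n ∣ ∑ a, (χ a : O) * e t a := by
    intro χ hχ
    have h1 := hnorm χ hχ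
    have h2 : σ (∑ x, (χ x : O) * ψ (1 * f x)) = ∑ x, (χ x : O) * ψ (t * f x) := by
      rw [map_sum]
      refine Finset.sum_congr rfl fun x _ => ?_
      rw [map_mul, hσψ, one_mul, hσN]
      rw [← Units.val_pow_eq_pow_val, ← map_pow, show x ^ N = 1 from pow_card_eq_one, map_one, Units.val_one]
    obtain ⟨u, hu⟩ := (σ.associated_apply_of_mul_eq_pow (fun P hP hpP x =>
      P.mem_of_dvd (hσ x) (Ideal.sub_one_mem_of_pow_prime_eq_one hp hζ.pow_eq_one hP hpP))
      h1).symm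
    rw [← hprod, ← h2, ← hu, ← h1]
    exact ⟨u, by ring⟩
  have hetot : ∑ a, e t a = 1 := by
    have h1 := hprod t 1
    simp only [MonoidHom.one_apply, Units.val_one, one_mul] at h1
    rw [← h1, hsum t ht]
    have h2 := hsum (-1) (by simp)
    simp only [neg_mul, one_mul] at h2
    rw [h2]; ring
  have hdvd : ∀ a, (p : O) ^ n ∣ e t a + 1 := by
    intro a
    have h1 := dvd_card_mul_sub_sum_of_dvd_dual hdvdχ a
    rw [hetot] at h1
    have h2 : e t a + 1 = (p : O) ^ n * e t a - (N * e t a - 1) := by rw [hpn]; ring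
    rw [h2]
    exact dvd_sub (dvd_mul_right _ _) h1
  -- the number of `y` at which `t * f (a * y) - f y` takes a given value
  let w : G → ZMod p → ℕ := fun a b =>
    Fintype.card {y // t * f (a * y) - f y = b} + (if b = 0 then 1 else 0)
  have hwsum : ∀ a, ∑ b, w a b = p ^ n := by
    intro a
    simp only [w, Finset.sum_add_distrib]
    rw [← hG, hN]
    congr 1
    · rw [← Fintype.card_sigma]
      exact Fintype.card_congr (Equiv.sigmaFiberEquiv fun y => t * f (a * y) - f y)
    · simp
  have hew : ∀ a, e t a + 1 = ∑ b, (w a b : O) * ψ b := by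
    intro a
    have h1 : e t a = ∑ y, ψ (t * f (a * y) - f y) := by
      simp [e, sub_eq_add_neg, AddChar.map_add_eq_mul]
    simp only [w, Nat.cast_add, add_mul, Finset.sum_add_distrib]
    congr 1
    · rw [h1, ← Finset.sum_fiberwise Finset.univ fun y => t * f (a * y) - f y]
      refine Finset.sum_congr rfl fun b _ => ?_
      rw [Finset.sum_congr rfl (g := fun _ => ψ b) (fun x hx => by
        rw [(Finset.mem_filter.1 hx).2])]
      simp [Fintype.card_subtype]
    · simp
  have hwcong : ∀ a b b', ((p ^ n : ℕ) : ℤ) ∣ (w a b : ℤ) - w a b' := by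
    intro a b b'
    have h1 := NumberField.dvd_coeff_sub_of_dvd_sum_root_pow hp hζ (p ^ n)
      (pow_ne_zero _ hp.ne_zero) (fun i => (w a (i : ZMod p) : ℤ)) (by
        have h2 := hdvd a
        rw [hew] at h2
        push_cast
        convert h2 using 1
        refine Finset.sum_nbij' (fun i => (i : ZMod p)) ZMod.val (by simp)
          (fun b _ => Finset.mem_range.2 (ZMod.val_lt b))
          (fun i hi => ZMod.val_cast_of_lt (Finset.mem_range.1 hi)) (by simp) ?_
        intro i hi
        rw [hψ, ZMod.val_cast_of_lt (Finset.mem_range.1 hi)]) (ZMod.val_lt b) (ZMod.val_lt b')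
    simpa using h1
  by_cases hall : ∀ a, w a 0 = p ^ (n - 1)
  · exfalso
    have h1 : ∑ a, Fintype.card {y // t * f (a * y) - f y = 0} =
        ∑ y, Fintype.card {x // f x = t⁻¹ * f y} := by
      simp only [Fintype.card_subtype, Finset.card_filter]
      rw [Finset.sum_comm]
      refine Finset.sum_congr rfl fun y _ => ?_
      rw [← Equiv.sum_comp (Equiv.mulRight y)
        (fun x => if f x = t⁻¹ * f y then 1 else 0)]
      refine Finset.sum_congr rfl fun a _ => if_congr ?_ rfl rfl
      rw [sub_eq_zero, Equiv.coe_mulRight, eq_inv_mul_iff_mul_eq₀ ht]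
    have h2 : ∑ y, (Fintype.card {x // f x = t⁻¹ * f y} + if f y = 0 then 1 else 0) =
        N * p ^ (n - 1) := by
      have : ∀ y, Fintype.card {x // f x = t⁻¹ * f y} + (if f y = 0 then 1 else 0) =
          p ^ (n - 1) := by
        intro y
        rw [← hf (t⁻¹ * f y)]
        simp [ht]
      simp [this, hN]
    have h3 : ∑ a, w a 0 = N * p ^ (n - 1) := by simp [hall, hN]
    have h4 := hf 0
    have h5 : ∑ y, (if f y = 0 then 1 else 0) = Fintype.card {x // f x = 0} := by
      rw [Fintype.card_subtype, Finset.card_filter]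
    simp only [w, Finset.sum_add_distrib, if_true] at h3 h2 h4
    rw [h5] at h2
    rw [h1] at h3
    simp only [Finset.sum_const, Finset.card_univ, smul_eq_mul, mul_one, ← hN] at h3
    have h6 : p ^ (n - 1) < p ^ n := Nat.pow_lt_pow_right hp.one_lt (by omega)
    omega
  · push Not at hall
    obtain ⟨a, ha⟩ := hall
    refine ⟨a, ?_⟩
    rcases exists_eq_of_modEq_of_sum_eq (hwsum a) (hwcong a) with ⟨b, hb⟩ | h
    · have hle : Fintype.card {y // t * f (a * y) - f y = b} ≤ N := Fintype.card_subtype_le _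
      have hb0 : b = 0 := by
        by_contra hb0
        simp only [w, if_neg hb0] at hb
        omega
      subst hb0
      have h1 : Fintype.card {y // t * f (a * y) - f y = 0} = Fintype.card G := by
        simp only [w, if_true] at hb
        omega
      intro x
      have h2 : Finset.univ.filter (fun y => t * f (a * y) - f y = 0) = Finset.univ := by
        rw [← Finset.card_eq_iff_eq_univ, ← h1, Fintype.card_subtype]
      have h3 : x ∈ Finset.univ.filter fun y => t * f (a * y) - f y = 0 := by rw [h2]; simp
      exact sub_eq_zero.1 (Finset.mem_filter.1 h3).2
    · exfalso
      apply ha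
      have h1 := h 0
      rw [ZMod.card] at h1
      have h2 : p ^ n = p * p ^ (n - 1) := by rw [← pow_succ', Nat.sub_add_cancel (by omega)]
      exact Nat.eq_of_mul_eq_mul_left hp.pos (h1.trans h2)

theorem Nat.card_units_subtype {L : Type*} [GroupWithZero L] (P : L → Prop) :
    Nat.card {x : Lˣ // P x} = Nat.card {x : L | x ≠ 0 ∧ P x} :=
  Nat.card_congr
    { toFun := fun x => ⟨x.1, x.1.ne_zero, x.2⟩
      invFun := fun x => ⟨Units.mk0 x.1 x.2.1, x.2.2⟩
      left_inv := fun _ => Subtype.ext (Units.ext rfl)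
      right_inv := fun _ => rfl }

theorem IsBalanced.card_units_add {K L : Type*} [Field K] [Field L] [Fintype L] [DecidableEq L]
    [DecidableEq K]
    {q n : ℕ} (hq : 0 < q) {h : L → K} (hh : IsBalanced q n h) (b : K) :
    Fintype.card {x : Lˣ // h x = b} + (if b = 0 then 1 else 0) = q ^ (n - 1) := by
  rw [← Nat.card_eq_fintype_card, Nat.card_units_subtype fun x => h x = b]
  split_ifs with hb
  · rw [hb, hh.1, Nat.sub_add_cancel (Nat.one_le_pow _ _ hq)]
  · rw [hh.2 b hb, add_zero]

theorem card_inter_fiber_of_linear_fibers {X K : Type*} [Fintype X] [Field K] [Fintype K]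
    [DecidableEq K] {M : ℕ} (hX : Fintype.card X + 1 = Fintype.card K * M) {u v : X → K}
    (hu : ∀ b, Fintype.card {x // u x = b} + (if b = 0 then 1 else 0) = M)
    (huv : ∀ s b, Fintype.card {x // v x - s * u x = b} + (if b = 0 then 1 else 0) = M)
    (b₁ b₂ : K) :
    Fintype.card K * (Fintype.card {x // u x = b₁ ∧ v x = b₂} +
      (if b₁ = 0 ∧ b₂ = 0 then 1 else 0)) = M := by
  classical
  have hlines : ∀ c₁ c₂ : K, Fintype.card {s : K // c₂ - s * c₁ = 0} + (if c₁ = 0 then 1 else 0) =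
      1 + Fintype.card K * (if c₁ = 0 ∧ c₂ = 0 then 1 else 0) := by
    intro c₁ c₂
    by_cases h1 : c₁ = 0
    · by_cases h2 : c₂ = 0
      · simp [h1, h2, add_comm]
      · simp [h1, h2]
    · have : ∀ s, c₂ - s * c₁ = 0 ↔ s = c₂ / c₁ := fun s => by
        rw [sub_eq_zero, eq_div_iff h1, eq_comm]
      simp [h1, this]
  have hcount : ∑ s, Fintype.card {x // v x - s * u x = b₂ - s * b₁} +
      Fintype.card {x // u x = b₁} =
      Fintype.card X + Fintype.card K * Fintype.card {x // u x = b₁ ∧ v x = b₂} := by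
    have h1 := Finset.sum_congr (s₁ := (Finset.univ : Finset X)) rfl
      fun x _ => hlines (u x - b₁) (v x - b₂)
    simp only [Finset.sum_add_distrib, ← Finset.mul_sum, sub_eq_zero (b := b₁),
      sub_eq_zero (b := b₂), ← Finset.card_filter, ← Fintype.card_subtype, Finset.sum_const,
      Finset.card_univ, smul_eq_mul, mul_one] at h1
    rw [← h1]
    congr 1
    simp only [Fintype.card_subtype, Finset.card_filter]
    rw [Finset.sum_comm]
    refine Finset.sum_congr rfl fun x _ => Finset.sum_congr rfl fun s _ => if_congr ?_ rfl rfl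
    rw [← sub_eq_zero, mul_sub, sub_sub_sub_comm]
  have hsum : ∑ s, Fintype.card {x // v x - s * u x = b₂ - s * b₁} +
      Fintype.card {s : K // b₂ - s * b₁ = 0} = Fintype.card K * M := by
    rw [Fintype.card_subtype, Finset.card_filter, ← Finset.sum_add_distrib,
      Finset.sum_congr rfl fun s _ => huv s _]
    simp
  have h1 := hlines b₁ b₂
  have h2 := hu b₁
  rw [mul_add]
  omega

theorem IsDiffBalanced.eq_of_forall_apply_mul_eq {K L : Type*} [Field K] [Field L] {q n : ℕ}
    (hq : 0 < q) {f : L → K} (hf : IsDiffBalanced q n f) {a b : L} (ha : a ≠ 0) (hb : b ≠ 0)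
    (h : ∀ x, x ≠ 0 → f (a * x) = f (b * x)) : a = b := by
  by_contra hab
  have h1 := (hf (a / b) (div_ne_zero ha hb) (fun h => hab ((div_eq_one_iff_eq hb).1 h))).2 1
    one_ne_zero
  have h2 : {x : L | x ≠ 0 ∧ f (a / b * x) - f x = 1} = ∅ := by
    ext x
    simp only [Set.mem_ofPred_eq, Set.mem_empty_iff_false, iff_false, not_and]
    intro hx
    have h3 := h (b⁻¹ * x) (mul_ne_zero (inv_ne_zero hb) hx)
    rw [← mul_assoc, ← div_eq_mul_inv, mul_inv_cancel_left₀ hb] at h3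
    simp [h3]
  rw [h2] at h1
  simp only [Nat.card_eq_fintype_card] at h1
  exact (Nat.pow_pos hq).ne h1

theorem IsDiffBalanced.exists_forall_apply_mul_eq_mul {K L : Type*} [Field K] [Field L]
    [Fintype K] [Fintype L] {p n : ℕ} (hp : p.Prime) (hn : n ≠ 0) (hK : Fintype.card K = p)
    (hL : Fintype.card L = p ^ n) {f : L → K} (hdb : IsDiffBalanced p n f)
    (hbal : IsBalanced p n f) {s : K} (hs : s ≠ 0) :
    ∃ a : L, a ≠ 0 ∧ ∀ x, x ≠ 0 → f (a * x) = s * f x := by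
  classical
  let φ : K ≃+* ZMod p := (ZMod.ringEquivOfPrime K hp hK).symm
  have hφ : ∀ {h : L → K}, IsBalanced p n h → ∀ b, Fintype.card {x : Lˣ // φ (h x) = b} +
      (if b = 0 then 1 else 0) = p ^ (n - 1) := by
    intro h hh b
    have := hh.card_units_add hp.pos (φ.symm b)
    simpa [RingEquiv.eq_symm_apply] using this
  obtain ⟨a, ha⟩ := exists_forall_mul_eq_apply_mul (G := Lˣ) (f := fun x => φ (f x)) hp hn
    (by rw [Fintype.card_units, hL, Nat.sub_add_cancel (Nat.one_le_pow _ _ hp.pos)]) (hφ hbal)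
    (fun a ha b => by
      have := hφ (hdb a a.ne_zero (by simpa using ha)) b
      simpa using this)
    (t := φ s⁻¹) (by simpa using hs)
  refine ⟨a, a.ne_zero, fun x hx => ?_⟩
  have h1 := ha (Units.mk0 x hx)
  rw [← map_mul, φ.injective.eq_iff] at h1
  rw [← inv_mul_eq_iff_eq_mul₀ hs]
  simpa using h1

theorem exists_algebraMap_eq_of_pow_card_eq_self {K L : Type*} [Field K] [Field L] [Algebra K L]
    {p n : ℕ} [Fintype L] (hp : p.Prime) (hL : Fintype.card L = p ^ n) {x : L} (hx : x ^ p = x) :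
    ∃ c : K, algebraMap K L c = x := by
  have := Fact.mk hp
  have : CharP L p := charP_of_card_eq_prime_pow hL
  have h1 := (Subfield.mem_bot_iff_pow_eq_self (F := L) (p := p)).2 hx
  exact (bot_le : (⊥ : Subfield L) ≤ (algebraMap K L).fieldRange) h1

/-- Every balanced difference balanced function `f : L∖{0} → 𝔽_p` is
two-tuple balanced. -/
theorem stmt_14 {K L : Type*} [Field K] [Field L] [Algebra K L] [Fintype K] [Fintype L]
    (p n : ℕ) (hp : p.Prime) (hodd : Odd p) (hn : 2 ≤ n)
    (hK : Fintype.card K = p) (hL : Fintype.card L = p ^ n)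
    (f : L → K) (hdb : IsDiffBalanced p n f) (hbal : IsBalanced p n f) :
    IsTwoTupleBalanced p n f := by
  classical
  have hLunits : Fintype.card Lˣ + 1 = p ^ n := by
    rw [Fintype.card_units, hL, Nat.sub_add_cancel (Nat.one_le_pow _ _ hp.pos)]
  have hmult : ∀ s : Kˣ, ∃ c : Kˣ, ∀ x : L, x ≠ 0 → f (algebraMap K L c * x) = s * f x := by
    intro s
    obtain ⟨a, ha0, ha⟩ := hdb.exists_forall_apply_mul_eq_mul hp (by omega) hK hL hbal s.ne_zero
    have hpow : ∀ k : ℕ, ∀ x : L, x ≠ 0 → f (a ^ k * x) = s ^ k * f x := by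
      intro k
      induction k with
      | zero => simp
      | succ k ih =>
        intro x hx
        rw [pow_succ, mul_assoc, ih _ (mul_ne_zero ha0 hx), ha x hx, pow_succ, mul_assoc]
    have hap : a ^ p = a := by
      refine hdb.eq_of_forall_apply_mul_eq hp.pos (pow_ne_zero _ ha0) ha0 fun x hx => ?_
      rw [hpow p x hx, ha x hx, ← hK, FiniteField.pow_card]
    obtain ⟨c, rfl⟩ := exists_algebraMap_eq_of_pow_card_eq_self (K := K) hp hL hap
    exact ⟨Units.mk0 c fun h => ha0 (by simp [h]), ha⟩
  choose g hg using hmult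
  have hg_inj : Function.Injective g := by
    intro s t hst
    have h1 := hbal.2 1 one_ne_zero
    obtain ⟨x, hx, hfx⟩ : {x : L | x ≠ 0 ∧ f x = 1}.Nonempty := by
      rw [Set.nonempty_iff_ne_empty]
      intro h2
      rw [h2] at h1
      simp only [Nat.card_eq_fintype_card] at h1
      exact (Nat.pow_pos hp.pos).ne h1
    have h2 := (hg s x hx).symm.trans ((congrArg (fun c : Kˣ => f (algebraMap K L c * x)) hst).trans
      (hg t x hx))
    exact Units.ext (by simpa [hfx] using h2)
  have hg_surj : Function.Surjective g := Finite.surjective_of_injective hg_inj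
  refine ⟨fun a ha0 haK => ?_, fun c hc => ?_⟩
  · have hfcard := hbal.card_units_add hp.pos
    have hlin : ∀ s b, Fintype.card {x : Lˣ // f (a * x) - s * f x = b} +
        (if b = 0 then 1 else 0) = p ^ (n - 1) := by
      intro s b
      by_cases hs : s = 0
      · rw [← hfcard b]
        congr 1
        refine Fintype.card_congr ((Equiv.mulLeft (Units.mk0 a ha0)).subtypeEquiv fun x => ?_)
        simp [hs]
      · set c := algebraMap K L (g (Units.mk0 s hs)) with hc
        have hc0 : c ≠ 0 := by simp [hc]
        have hac : a / c ≠ 1 := fun h => haK _ ((div_eq_one_iff_eq hc0).1 h).symm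
        rw [← (hdb (a / c) (div_ne_zero ha0 hc0) hac).card_units_add hp.pos b]
        congr 1
        refine Fintype.card_congr ((Equiv.mulLeft (Units.mk0 c hc0)).subtypeEquiv fun x => ?_)
        have h1 := hg (Units.mk0 s hs) x x.ne_zero
        rw [Units.val_mk0, ← hc] at h1
        simp only [Equiv.coe_mulLeft, Units.val_mul, Units.val_mk0, h1, ← mul_assoc,
          div_mul_cancel₀ a hc0]
    have hcount : ∀ b₁ b₂, Ntt f a b₁ b₂ + (if b₁ = 0 ∧ b₂ = 0 then 1 else 0) = p ^ (n - 2) := by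
      intro b₁ b₂
      have h1 := card_inter_fiber_of_linear_fibers (X := Lˣ) (u := fun x => f x)
        (v := fun x => f (a * x)) (by
          rw [hLunits, hK, ← pow_succ', Nat.sub_add_cancel (by omega)]) hfcard hlin b₁ b₂
      rw [← Nat.card_eq_fintype_card (α := {x : Lˣ // f x = b₁ ∧ f (a * x) = b₂}),
        Nat.card_units_subtype fun x => f x = b₁ ∧ f (a * x) = b₂, hK,
        show n - 1 = n - 2 + 1 by omega, pow_succ'] at h1
      exact Nat.eq_of_mul_eq_mul_left hp.pos h1
    refine ⟨?_, fun b₁ b₂ hb => ?_⟩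
    · have := hcount 0 0
      simp only [and_self, if_true] at this
      omega
    · simpa [hb] using hcount b₁ b₂
  · obtain ⟨μ, hμ⟩ := hg_surj (Units.mk0 c hc)
    have hfμ : ∀ x : L, x ≠ 0 → f (algebraMap K L c * x) = μ * f x := by
      intro x hx
      rw [← hg μ x hx, hμ, Units.val_mk0]
    have hN : ∀ b₁, Ntt f (algebraMap K L c) b₁ (μ * b₁) = Nat.card {x : L | x ≠ 0 ∧ f x = b₁} := by
      intro b₁
      unfold Ntt
      congr 2
      ext x
      simp only [Set.mem_ofPred_eq]
      constructor
      · rintro ⟨hx, h, -⟩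
        exact ⟨hx, h⟩
      · rintro ⟨hx, h⟩
        exact ⟨hx, h, by rw [hfμ x hx, h]⟩
    refine ⟨μ, hfμ, ?_, fun b₁ hb₁ => (hN b₁).trans (hbal.2 b₁ hb₁), fun b₁ b₂ hb => ?_⟩
    · have := hN 0
      rw [mul_zero] at this
      exact this.trans hbal.1
    · have h2 : {x : L | x ≠ 0 ∧ f x = b₁ ∧ f (algebraMap K L c * x) = b₂} = ∅ := by
        ext x
        simp only [Set.mem_ofPred_eq, Set.mem_empty_iff_false, iff_false]
        rintro ⟨hx, rfl, h⟩
        exact hb (h.symm.trans (hfμ x hx))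
      unfold Ntt
      rw [h2]
      simp
end

section
/- Let p be an odd prime and n ≥ 2. Let L be a finite field with |L| = p^n and K = 𝔽_p. If f : L∖{0} → K is difference balanced and balanced, then for every b ∈ K∖{0} the preimage D_b := {x ∈ L∖{0} : f(x) = b}, viewed as a subset of the cyclic group L^×, is a ((p^n−1)/(p−1), p−1, p^{n−1}, p^{n−2}) relative difference set relative to the subgroup K^× of nonzero elements of the prime subfield. -/
/-- `D ⊆ G` is an `(m, n, k, λ)` relative difference set relative to `N`. -/
def IsRelDiffSet {G : Type*} [Group G] (D : Set G) (N : Subgroup G)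
    (m n k lam : ℕ) : Prop :=
  Nat.card G = m * n ∧ Nat.card N = n ∧ Nat.card D = k ∧
    (∀ g : G, g ∉ N →
      Nat.card {pq : G × G // pq.1 ∈ D ∧ pq.2 ∈ D ∧ pq.1 * pq.2⁻¹ = g} = lam) ∧
    (∀ g : G, g ∈ N → g ≠ 1 →
      Nat.card {pq : G × G // pq.1 ∈ D ∧ pq.2 ∈ D ∧ pq.1 * pq.2⁻¹ = g} = 0)

open Polynomial in
/-- A model of the ring of integers of the `p`-th cyclotomic field. -/
lemma exists_cyclotomic_ring (p : ℕ) (hp : p.Prime) :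
    ∃ (O : Type) (_ : CommRing O) (_ : IsDomain O) (_ : CharZero O) (ω : O),
      IsPrimitiveRoot ω p ∧ (∀ z : O, ∃ P : ℤ[X], aeval ω P = z) ∧
      ∀ t : ℕ, t.Coprime p → ∃ σ : O →+* O, σ ω = ω ^ t := by
  have hpos := hp.pos
  have : IsDomain (AdjoinRoot (cyclotomic p ℤ)) :=
    AdjoinRoot.isDomain_of_prime (cyclotomic.irreducible hpos).prime
  have hinj : Function.Injective (AdjoinRoot.of (cyclotomic p ℤ)) :=
    AdjoinRoot.of.injective_of_degree_ne_zero (degree_cyclotomic_pos p ℤ hpos).ne'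
  have : CharZero (AdjoinRoot (cyclotomic p ℤ)) := charZero_of_injective_ringHom hinj
  have : NeZero (p : AdjoinRoot (cyclotomic p ℤ)) := ⟨by exact_mod_cast hp.ne_zero⟩
  have hroot : IsPrimitiveRoot (AdjoinRoot.root (cyclotomic p ℤ)) p := by
    rw [← isRoot_cyclotomic_iff, ← map_cyclotomic p (AdjoinRoot.of (cyclotomic p ℤ))]
    exact AdjoinRoot.isRoot_root _
  refine ⟨_, inferInstance, inferInstance, inferInstance, AdjoinRoot.root _, hroot, fun z => ?_,
    fun t ht => ?_⟩
  · obtain ⟨P, rfl⟩ := AdjoinRoot.mk_surjective z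
    exact ⟨P, AdjoinRoot.aeval_eq P⟩
  · refine ⟨AdjoinRoot.lift (AdjoinRoot.of _) (AdjoinRoot.root _ ^ t) ?_, AdjoinRoot.lift_root _⟩
    have h := hroot.pow_of_coprime t ht
    rw [← isRoot_cyclotomic_iff, ← map_cyclotomic p (AdjoinRoot.of (cyclotomic p ℤ)),
      IsRoot, eval_map] at h
    exact h

/-- If `σ` preserves `π`-divisibility and every element is, modulo `π`, a `σ`-fixed element
satisfying `x ^ (k + 2) = x`, then replacing `x` by `σ x` does not change which powers of `π`
divide `x * y`. -/
lemma pow_dvd_map_mul {T : Type*} [CommRing T] {π : T} (hπ : ∀ z w, π * z = π * w → z = w)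
    (σ : T →+* T) (hσ : π ∣ σ π) {k : ℕ}
    (hT : ∀ x, ∃ x₀, σ x₀ = x₀ ∧ π ∣ x - x₀ ∧ π ∣ x₀ ^ (k + 2) - x₀) :
    ∀ (N : ℕ) (x y : T), π ^ N ∣ x * y → π ^ N ∣ σ x * y := by
  intro N
  induction N with
  | zero => simp
  | succ N ih =>
    intro x y hxy
    have cancel : ∀ z, π ^ (N + 1) ∣ π * z → π ^ N ∣ z := by
      rintro z ⟨w, hw⟩
      exact ⟨w, hπ _ _ (by rw [hw]; ring)⟩
    obtain ⟨x₀, hfix, ⟨d, hd⟩, ⟨c, hc⟩⟩ := hT x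
    have hx : x = x₀ + π * d := by linear_combination hd
    obtain ⟨m, hm⟩ := (dvd_pow_self π N.succ_ne_zero).trans hxy
    have hy₁ : x₀ ^ (k + 1) * y = π * (x₀ ^ k * (m - d * y)) := by
      linear_combination x₀ ^ k * hm - x₀ ^ k * y * hd
    have hx₁ : x * (1 - x₀ ^ (k + 1)) = π * (d * (1 - x₀ ^ (k + 1)) - c) := by
      linear_combination (1 - x₀ ^ (k + 1)) * hd - hc
    have h₁ := ih (d * (1 - x₀ ^ (k + 1)) - c) y <| cancel _ <| by
      rw [← mul_assoc, ← hx₁, mul_right_comm]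
      exact hxy.mul_right _
    have h₂ := ih x (x₀ ^ k * (m - d * y)) <| cancel _ <| by
      rw [mul_left_comm, ← hy₁, mul_left_comm]
      exact hxy.mul_left _
    have hsplit : σ x * y = σ π * (σ (d * (1 - x₀ ^ (k + 1)) - c) * y) +
        π * (σ x * (x₀ ^ k * (m - d * y))) := by
      have h := congrArg σ hx₁
      rw [map_mul, map_mul, map_sub σ 1, map_pow, hfix, map_one] at h
      linear_combination y * h + σ x * hy₁
    rw [hsplit, pow_succ']
    exact dvd_add (mul_dvd_mul hσ h₁) (mul_dvd_mul_left π h₂)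

open Polynomial in
lemma cyclotomic_dvd_of_aeval_eq_zero {O k : Type*} [CommRing O] [Field k] [CharZero k] {ω : O}
    {φ : O →+* k} (hφ : Function.Injective φ) {p : ℕ} (hp : 0 < p) (hω : IsPrimitiveRoot ω p)
    {P : ℤ[X]} (hP : aeval ω P = 0) : cyclotomic p ℤ ∣ P := by
  have hω' := hω.map_of_injective hφ
  rw [cyclotomic_eq_minpoly hω' hp]
  refine minpoly.isIntegrallyClosed_dvd (hω'.isIntegral hp) ?_
  have h := congrArg φ hP
  rw [aeval_def, hom_eval₂, map_zero] at h
  rw [aeval_def, ← h]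
  congr 1
  exact RingHom.ext_int _ _

section CyclotomicRing

variable {O : Type*} [CommRing O] {p : ℕ} [Fact p.Prime] {ω : O}

lemma IsPrimitiveRoot.associated_sub_one_pow_prime [IsDomain O] (hω : IsPrimitiveRoot ω p) :
    Associated ((ω - 1) ^ (p - 1)) (p : O) := by
  have hp : p.Prime := Fact.out
  obtain ⟨m, rfl⟩ := Nat.exists_eq_succ_of_ne_zero hp.ne_zero
  have h := hω.prod_pow_sub_one_eq_order
  push_cast
  rw [← h]
  refine Associated.trans ?_ (associated_unit_mul_right _ _ (isUnit_one.neg.pow m))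
  have h' : ∏ _k ∈ Finset.range m, (ω - 1) = (ω - 1) ^ m := by simp
  rw [← h']
  refine Associated.prod _ _ _ fun i hi => ?_
  refine hω.associated_sub_one_pow_sub_one_of_coprime ?_
  exact (Nat.coprime_of_lt_prime i.succ_ne_zero (by simpa using hi) hp).symm

open Polynomial in
lemma exists_intCast_sub_one_dvd (hgen : ∀ z : O, ∃ P : ℤ[X], aeval ω P = z) (z : O) :
    ∃ m : ℤ, ω - 1 ∣ z - m := by
  obtain ⟨P, rfl⟩ := hgen z
  refine ⟨P.eval 1, ?_⟩
  have h := sub_dvd_eval_sub ω 1 (P.map (algebraMap ℤ O))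
  simpa [eval_map, aeval_def, eval₂_at_one] using h

open Polynomial in
lemma exists_sum_zmodChar (hω : ω ^ p = 1) (hgen : ∀ z : O, ∃ P : ℤ[X], aeval ω P = z) (z : O) :
    ∃ m : ZMod p → ℤ, z = ∑ j, (m j : O) * AddChar.zmodChar p hω j := by
  obtain ⟨P, rfl⟩ := hgen z
  induction P using Polynomial.induction_on' with
  | add P Q hP hQ =>
    obtain ⟨a, ha⟩ := hP
    obtain ⟨b, hb⟩ := hQ
    exact ⟨a + b, by simp [ha, hb, add_mul, Finset.sum_add_distrib]⟩
  | monomial i c =>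
    refine ⟨Pi.single (i : ZMod p) c, ?_⟩
    rw [Finset.sum_eq_single (i : ZMod p) (by intro j _ hj; simp [hj]) (by simp)]
    simp [AddChar.zmodChar_apply', aeval_monomial]

open Polynomial in
lemma eq_of_sum_zmodChar_eq_zero [IsDomain O] [CharZero O] (hω : IsPrimitiveRoot ω p) (m : ZMod p → ℤ)
    (h : ∑ j, (m j : O) * AddChar.zmodChar p hω.pow_eq_one j = 0) (i j : ZMod p) : m i = m j := by
  have hp : p.Prime := Fact.out
  let P : ℤ[X] := ∑ i ∈ Finset.range p, monomial i (m i)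
  have hPc : ∀ i : ZMod p, P.coeff i.val = m i := by
    intro i
    simp [P, coeff_monomial, ZMod.val_lt]
  have hP : aeval ω P = 0 := by
    rw [← h]
    simp only [P, map_sum, aeval_monomial]
    refine (Finset.sum_bij (fun j _ => ZMod.val j) (fun j _ => by simpa using ZMod.val_lt j)
      (fun a _ b _ hab => ZMod.val_injective p hab)
      (fun b hb => ⟨b, Finset.mem_univ _, ZMod.val_cast_of_lt (by simpa using hb)⟩)
      (fun j _ => ?_)).symm
    simp [AddChar.zmodChar_apply]
  have hdvd : cyclotomic p ℤ ∣ P := by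
    have : CharZero (FractionRing O) :=
      charZero_of_injective_algebraMap (IsFractionRing.injective O (FractionRing O))
    exact cyclotomic_dvd_of_aeval_eq_zero (IsFractionRing.injective O (FractionRing O)) hp.pos hω hP
  have hPdeg : P.degree < p := by
    refine (degree_sum_le _ _).trans_lt ?_
    rw [Finset.sup_lt_iff (WithBot.bot_lt_coe _)]
    intro i hi
    exact (degree_monomial_le _ _).trans_lt (by simpa using hi)
  obtain ⟨Q, hQ⟩ := hdvd
  have hQdeg : Q.natDegree = 0 := by
    by_cases hQ0 : Q = 0
    · simp [hQ0]
    have h1 : P.natDegree = (p - 1) + Q.natDegree := by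
      rw [hQ, natDegree_mul (cyclotomic_ne_zero p ℤ) hQ0, natDegree_cyclotomic,
        Nat.totient_prime hp]
    have hP0 : P ≠ 0 := by rw [hQ]; exact mul_ne_zero (cyclotomic_ne_zero p ℤ) hQ0
    have h2 : P.natDegree < p := (natDegree_lt_iff_degree_lt hP0).2 hPdeg
    omega
  rw [eq_C_of_natDegree_eq_zero hQdeg, cyclotomic_prime] at hQ
  have hc : ∀ i : ZMod p, m i = Q.coeff 0 := by
    intro i
    rw [← hPc i, hQ, coeff_mul_C]
    simp [coeff_X_pow, ZMod.val_lt]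
  rw [hc i, hc j]

section GroupAlgebra

variable {G : Type*}

lemma MonoidAlgebra.coeff_sum_single [Fintype G] (u : G → O) (a : G) :
    (∑ g, MonoidAlgebra.single g (u g)).coeff a = u a := by
  classical
  simp [MonoidAlgebra.coeff_sum, Finsupp.single_apply]

variable [CommGroup G]

lemma MonoidAlgebra.exists_fixed_sub_dvd (hω : IsPrimitiveRoot ω p) [IsDomain O]
    (hgen : ∀ z : O, ∃ P : Polynomial ℤ, Polynomial.aeval ω P = z) (σ : O →+* O) {n : ℕ}
    (hG : ∀ g : G, g ^ p ^ n = g) (x : MonoidAlgebra O G) :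
    ∃ x₀, MonoidAlgebra.mapRingHom G σ x₀ = x₀ ∧
      algebraMap O (MonoidAlgebra O G) (ω - 1) ∣ x - x₀ ∧
      algebraMap O (MonoidAlgebra O G) (ω - 1) ∣ x₀ ^ p ^ n - x₀ := by
  have hp : p.Prime := Fact.out
  have hωp : ω - 1 ∣ (p : O) :=
    (dvd_pow_self _ (Nat.sub_ne_zero_of_lt hp.one_lt)).trans hω.associated_sub_one_pow_prime.dvd
  induction x using MonoidAlgebra.induction_linear with
  | zero => exact ⟨0, by simp, by simp, by simp [hp.ne_zero]⟩
  | add x y hx hy =>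
    obtain ⟨x₀, hx, hx', hx''⟩ := hx
    obtain ⟨y₀, hy, hy', hy''⟩ := hy
    refine ⟨x₀ + y₀, by rw [map_add, hx, hy], ?_, ?_⟩
    · convert dvd_add hx' hy' using 1
      ring
    · obtain ⟨r, hr⟩ := exists_add_pow_prime_pow_eq hp x₀ y₀ n
      have hpr : algebraMap O (MonoidAlgebra O G) (ω - 1) ∣ p * (x₀ * y₀ * r) := by
        have := map_dvd (algebraMap O (MonoidAlgebra O G)) hωp
        rw [map_natCast] at this
        exact this.mul_right _
      convert dvd_add (dvd_add hx'' hy'') hpr using 1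
      rw [hr]
      ring
  | single g r =>
    obtain ⟨m, c, hm⟩ := exists_intCast_sub_one_dvd hgen r
    refine ⟨MonoidAlgebra.single g (m : O), by simp, ⟨MonoidAlgebra.single g c, ?_⟩, ?_⟩
    · rw [← Algebra.smul_def, MonoidAlgebra.smul_single, smul_eq_mul, ← hm,
        MonoidAlgebra.single_sub]
    · have hmp : (p : ℤ) ∣ m ^ p ^ n - m := by
        rw [← ZMod.intCast_eq_intCast_iff_dvd_sub]
        push_cast
        exact (ZMod.pow_card_pow _).symm
      have hmp' : ω - 1 ∣ (m : O) ^ p ^ n - m := by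
        refine hωp.trans ?_
        have := map_dvd (Int.castRingHom O) hmp
        simpa using this
      obtain ⟨c, hc⟩ := hmp'
      refine ⟨MonoidAlgebra.single g c, ?_⟩
      rw [MonoidAlgebra.single_pow, hG, ← Algebra.smul_def, MonoidAlgebra.smul_single,
        smul_eq_mul, ← hc, MonoidAlgebra.single_sub]

lemma MonoidAlgebra.sum_single_mul_sum_single_inv [Fintype G] (u w : G → O) :
    (∑ g, MonoidAlgebra.single g (u g)) * (∑ h, MonoidAlgebra.single h⁻¹ (w h)) =
      ∑ a, MonoidAlgebra.single a (∑ h, u (a * h) * w h) := by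
  have hsum : ∀ a : G, MonoidAlgebra.single a (∑ h, u (a * h) * w h) =
      ∑ h, MonoidAlgebra.single a (u (a * h) * w h) := fun a =>
    map_sum (MonoidAlgebra.singleAddHom a) _ _
  simp only [hsum, Finset.sum_mul_sum, MonoidAlgebra.single_mul_single]
  rw [Finset.sum_comm]
  conv_rhs => rw [Finset.sum_comm]
  refine Finset.sum_congr rfl fun h _ => ?_
  exact Fintype.sum_equiv (Equiv.mulRight h⁻¹) _ _ fun g => by simp

lemma MonoidAlgebra.natCast_dvd_coeff {m : ℕ} {x : MonoidAlgebra O G}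
    (h : (m : MonoidAlgebra O G) ∣ x) (a : G) : (m : O) ∣ x.coeff a := by
  obtain ⟨y, rfl⟩ := h
  refine ⟨y.coeff a, ?_⟩
  rw [← nsmul_eq_mul, ← nsmul_eq_mul]
  rfl

/-- The twisted autocorrelation sums of a sequence with ideal autocorrelation are congruent to
`-1` modulo the order plus one. -/
lemma pow_dvd_sum_zmodChar_add_one [IsDomain O] [Fintype G] (hω : IsPrimitiveRoot ω p)
    (hgen : ∀ z : O, ∃ P : Polynomial ℤ, Polynomial.aeval ω P = z) (σ : O →+* O)
    (t : ZMod p) (n : ℕ)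
    (hσ : ∀ j, σ (AddChar.zmodChar p hω.pow_eq_one j) = AddChar.zmodChar p hω.pow_eq_one (t * j))
    (hG : Fintype.card G + 1 = p ^ n) (f : G → ZMod p)
    (hbal : ∑ x, AddChar.zmodChar p hω.pow_eq_one (f x) = -1)
    (hbal' : ∑ x, AddChar.zmodChar p hω.pow_eq_one (-f x) = -1)
    (hdiff : ∀ a : G, a ≠ 1 →
      ∑ x, AddChar.zmodChar p hω.pow_eq_one (f (a * x) - f x) = -1) (a : G) :
    ((p ^ n : ℕ) : O) ∣ ∑ x, AddChar.zmodChar p hω.pow_eq_one (t * f (a * x) - f x) + 1 := by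
  classical
  have hp : p.Prime := Fact.out
  set ψ := AddChar.zmodChar p hω.pow_eq_one with hψ
  set v := Fintype.card G with hv
  set F : MonoidAlgebra O G := ∑ g, MonoidAlgebra.single g (ψ (f g)) with hF
  set F' : MonoidAlgebra O G := ∑ h, MonoidAlgebra.single h⁻¹ (ψ (-f h)) with hF'
  set J : MonoidAlgebra O G := ∑ g, MonoidAlgebra.single g 1 with hJ
  set S := MonoidAlgebra.mapRingHom G σ with hS
  have hsingleJ : ∀ (g : G) (r : O), MonoidAlgebra.single g r * J = algebraMap O _ r * J := by
    intro g r
    simp only [hJ, Finset.mul_sum, MonoidAlgebra.coe_algebraMap, Function.comp,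
      MonoidAlgebra.single_mul_single]
    exact Fintype.sum_equiv (Equiv.mulLeft g) _ _ fun h => by simp
  have hJJ : J * J = v * J := by
    nth_rewrite 1 [hJ]
    simp only [Finset.sum_mul, hsingleJ, map_one, one_mul, Finset.sum_const, Finset.card_univ,
      nsmul_eq_mul, hv]
  have hFJ : F * J = -J := by
    rw [hF, Finset.sum_mul, Finset.sum_congr rfl fun g _ => hsingleJ g _, ← Finset.sum_mul,
      ← map_sum, hbal, map_neg, map_one, neg_one_mul]
  have hF'J : F' * J = -J := by
    rw [hF', Finset.sum_mul, Finset.sum_congr rfl fun g _ => hsingleJ _ _, ← Finset.sum_mul,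
      ← map_sum, hbal', map_neg, map_one, neg_one_mul]
  have hSJ : S J = J := by simp [hS, hJ]
  have hSFJ : S F * J = -J := by rw [← hSJ, ← map_mul, hFJ, map_neg, hSJ]
  have hFF' : F * F' = (p ^ n : ℕ) - J := by
    rw [hF, hF', MonoidAlgebra.sum_single_mul_sum_single_inv]
    ext a
    rw [MonoidAlgebra.coeff_sum_single]
    simp only [← AddChar.map_add_eq_mul, ← sub_eq_add_neg]
    have hone : ((p ^ n : ℕ) : MonoidAlgebra O G) = MonoidAlgebra.single 1 ((p ^ n : ℕ) : O) := by
      rw [MonoidAlgebra.natCast_def]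
    rw [hone, MonoidAlgebra.coeff_sub, Finsupp.sub_apply, hJ, MonoidAlgebra.coeff_sum_single,
      MonoidAlgebra.coeff_single]
    by_cases ha : a = 1
    · subst ha
      rw [← hG]
      simp [hv]
    · rw [hdiff a ha, Finsupp.single_eq_of_ne ha]
      simp
  have hSFF' : S F * F' = ∑ a, MonoidAlgebra.single a (∑ x, ψ (t * f (a * x) - f x)) := by
    have : S F = ∑ g, MonoidAlgebra.single g (ψ (t * f g)) := by simp [hS, hF, hσ]
    rw [this, hF', MonoidAlgebra.sum_single_mul_sum_single_inv]
    simp only [← AddChar.map_add_eq_mul, ← sub_eq_add_neg]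
  have hGpow : ∀ g : G, g ^ p ^ n = g := by
    intro g
    rw [← hG, pow_succ, pow_card_eq_one, one_mul]
  have hω1 : ω - 1 ≠ 0 := sub_ne_zero.2 (hω.ne_one hp.one_lt)
  have hassoc : Associated (algebraMap O (MonoidAlgebra O G) (ω - 1) ^ ((p - 1) * n))
      ((p ^ n : ℕ) : MonoidAlgebra O G) := by
    have := (hω.associated_sub_one_pow_prime.pow_pow (n := n)).map
      (algebraMap O (MonoidAlgebra O G))
    rwa [← pow_mul, map_pow, map_pow, map_natCast, ← Nat.cast_pow] at this
  have hσω : σ ω = ψ t := by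
    have h1 : ψ 1 = ω := by
      have := AddChar.zmodChar_apply' hω.pow_eq_one 1
      simpa using this
    rw [← h1, hσ, mul_one]
  have hv1 : 1 ≤ v := Fintype.card_pos
  obtain ⟨k, hk⟩ : ∃ k, p ^ n = k + 2 := ⟨v - 1, by omega⟩
  have key := pow_dvd_map_mul (π := algebraMap O (MonoidAlgebra O G) (ω - 1)) (k := k)
    (fun z w hzw => by
      rw [← Algebra.smul_def, ← Algebra.smul_def] at hzw
      ext g
      have := congrArg (fun x => MonoidAlgebra.coeff x g) hzw
      simpa [hω1] using this) S
    (by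
      have h1 : S (algebraMap O (MonoidAlgebra O G) (ω - 1)) =
          algebraMap O (MonoidAlgebra O G) (σ (ω - 1)) := by simp [hS]
      rw [h1]
      refine map_dvd _ ?_
      rw [map_sub, map_one, hσω, hψ, AddChar.zmodChar_apply]
      exact sub_one_dvd_pow_sub_one _ _)
    (fun x => by
      rw [← hk]
      exact MonoidAlgebra.exists_fixed_sub_dvd hω hgen σ hGpow x)
    ((p - 1) * n) F (F' * (v - J))
    (by
      refine hassoc.dvd.trans ⟨v - J, ?_⟩
      linear_combination (v - J) * hFF' + hJJ)
  replace key := hassoc.symm.dvd.trans key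
  have hA : ((p ^ n : ℕ) : MonoidAlgebra O G) ∣ S F * F' + J := by
    obtain ⟨c, hc⟩ := key
    refine ⟨S F * F' - c, ?_⟩
    have hG' : (v : MonoidAlgebra O G) + 1 = (p ^ n : ℕ) := by
      rw [← hG, Nat.cast_succ]
    linear_combination (S F * F') * hG' - hc - S F * hF'J + hSFJ
  have := MonoidAlgebra.natCast_dvd_coeff hA a
  rwa [hSFF', MonoidAlgebra.coeff_add, Finsupp.add_apply, MonoidAlgebra.coeff_sum_single, hJ,
    MonoidAlgebra.coeff_sum_single] at this

lemma sum_zmodChar_eq_zero [IsDomain O] (hω : IsPrimitiveRoot ω p) :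
    ∑ j, AddChar.zmodChar p hω.pow_eq_one j = 0 := by
  have hp : p.Prime := Fact.out
  classical
  refine AddChar.sum_eq_zero_of_ne_one fun h => hω.ne_one hp.one_lt ?_
  have h1 := AddChar.zmodChar_apply' hω.pow_eq_one 1
  rw [h] at h1
  simpa using h1.symm

lemma sum_zmodChar_comp_add_one {X : Type*} [Fintype X] (hω : ω ^ p = 1) (h : X → ZMod p) :
    ∑ x, AddChar.zmodChar p hω (h x) + 1 =
      ∑ j, ((Finset.card {x | h x = j} + if j = 0 then 1 else 0 : ℕ) : O) *
        AddChar.zmodChar p hω j := by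
  simp only [Nat.cast_add, add_mul, Finset.sum_add_distrib]
  congr 1
  · rw [← Finset.sum_fiberwise (s := Finset.univ) (g := h)]
    refine Finset.sum_congr rfl fun j _ => ?_
    rw [Finset.sum_congr rfl fun x hx => by rw [(Finset.mem_filter.1 hx).2], Finset.sum_const,
      nsmul_eq_mul]
  · simp

lemma sum_zmodChar_comp_eq_neg_one [IsDomain O] {X : Type*} [Fintype X]
    (hω : IsPrimitiveRoot ω p) {h : X → ZMod p} {M : ℕ}
    (hM : ∀ j, (Finset.card {x | h x = j} + if j = 0 then 1 else 0) = M) :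
    ∑ x, AddChar.zmodChar p hω.pow_eq_one (h x) = -1 := by
  rw [eq_neg_iff_add_eq_zero, sum_zmodChar_comp_add_one]
  simp only [hM]
  rw [← Finset.mul_sum, sum_zmodChar_eq_zero hω, mul_zero]

/-- A sum of roots of unity, one of which is `1`, that is nonzero and divisible by its number
of terms has all its terms equal to `1`. -/
lemma eq_zero_of_card_dvd_sum_zmodChar [IsDomain O] [CharZero O] {X : Type*} [Fintype X]
    (hω : IsPrimitiveRoot ω p) (hgen : ∀ z : O, ∃ P : Polynomial ℤ, Polynomial.aeval ω P = z)
    {d : X → ZMod p} {q : ℕ} (hq : Fintype.card X + 1 = q)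
    (hdvd : (q : O) ∣ ∑ x, AddChar.zmodChar p hω.pow_eq_one (d x) + 1)
    (hne : ∑ x, AddChar.zmodChar p hω.pow_eq_one (d x) + 1 ≠ 0) (x : X) : d x = 0 := by
  by_contra hx
  set c : ZMod p → ℕ := fun j => Finset.card {x | d x = j} + if j = 0 then 1 else 0 with hc
  have hsum := sum_zmodChar_comp_add_one hω.pow_eq_one d
  have hctot : ∑ j, c j = q := by
    rw [← hq, ← Finset.card_univ, Finset.card_eq_sum_card_fiberwise (f := d) (t := Finset.univ)
      (by simp)]
    simp [hc, Finset.sum_add_distrib]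
  obtain ⟨z, hz⟩ := hdvd
  obtain ⟨m, hm⟩ := exists_sum_zmodChar hω.pow_eq_one hgen z
  have hcong : ∀ i j, (c i : ℤ) - q * m i = c j - q * m j := by
    refine eq_of_sum_zmodChar_eq_zero hω (fun j => (c j : ℤ) - q * m j) ?_
    push_cast
    simp only [sub_mul, Finset.sum_sub_distrib, mul_assoc]
    rw [← Finset.mul_sum, ← hm, ← hz, hsum, sub_eq_zero]
  have hc0 : 1 ≤ c 0 := by simp [hc]
  have hcx : 1 ≤ c (d x) := by
    have : 0 < Finset.card {y | d y = d x} := Finset.card_pos.2 ⟨x, by simp⟩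
    simp only [hc]
    omega
  have hpair : ∀ i j, i ≠ j → c i + c j ≤ q := by
    intro i j hij
    rw [← hctot, ← Finset.sum_pair hij]
    exact Finset.sum_le_sum_of_subset (Finset.subset_univ _)
  have hlt : ∀ j, c j < q := by
    intro j
    by_cases hj : j = 0
    · subst hj
      have := hpair _ _ hx
      omega
    · have := hpair _ _ hj
      omega
  have hall : ∀ j, c j = c 0 := by
    intro j
    have h0 : (c j : ℤ) - c 0 = 0 := by
      refine Int.eq_zero_of_abs_lt_dvd (m := (q : ℤ)) ⟨m j - m 0, ?_⟩ ?_
      · linear_combination hcong j 0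
      · have := hlt j
        have := hlt 0
        rw [abs_lt]
        omega
    omega
  refine hne ?_
  rw [hsum]
  change ∑ j, (c j : O) * _ = 0
  simp only [hall]
  rw [← Finset.mul_sum, sum_zmodChar_eq_zero hω, mul_zero]

end GroupAlgebra

end CyclotomicRing

/-- A balanced and difference balanced function to a prime field is homogeneous: multiplying
its values by a nonzero scalar amounts to translating its argument. -/
lemma exists_translate_eq_mul {G : Type*} [CommGroup G] [Fintype G] {p n M : ℕ} [Fact p.Prime]
    (hG : Fintype.card G + 1 = p ^ n) {f : G → ZMod p}
    (hbal : ∀ j, (Finset.card {x | f x = j} + if j = 0 then 1 else 0) = M)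
    (hdiff : ∀ a : G, a ≠ 1 →
      ∀ j, (Finset.card {x | f (a * x) - f x = j} + if j = 0 then 1 else 0) = M)
    {t : ZMod p} (ht : t ≠ 0) : ∃ a : G, ∀ x, f x = t * f (a * x) := by
  have hp : p.Prime := Fact.out
  obtain ⟨O, _, _, _, ω, hω, hgen, hσ⟩ := exists_cyclotomic_ring p hp
  set ψ := AddChar.zmodChar p hω.pow_eq_one with hψ
  have hcop : t.val.Coprime p := by
    refine (Nat.coprime_of_lt_prime ?_ (ZMod.val_lt t) hp).symm
    rwa [Ne, ZMod.val_eq_zero]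
  obtain ⟨σ, hσ⟩ := hσ t.val hcop
  have hσψ : ∀ j, σ (ψ j) = ψ (t * j) := by
    intro j
    have h := AddChar.zmodChar_apply' hω.pow_eq_one (t.val * j.val)
    rw [Nat.cast_mul, ZMod.natCast_zmod_val, ZMod.natCast_zmod_val] at h
    rw [hψ, h, AddChar.zmodChar_apply, map_pow, hσ, pow_mul]
  have hsum : ∑ x, ψ (f x) = -1 := sum_zmodChar_comp_eq_neg_one hω hbal
  have hsum_neg : ∑ x, ψ (-f x) = -1 := by
    refine sum_zmodChar_comp_eq_neg_one (h := fun x => -f x) (M := M) hω fun j => ?_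
    rw [← hbal (-j)]
    simp [neg_eq_iff_eq_neg]
  have hdvd := pow_dvd_sum_zmodChar_add_one hω hgen σ t n hσψ hG f hsum hsum_neg
    fun a ha => sum_zmodChar_comp_eq_neg_one hω (hdiff a ha)
  have htotal : ∑ a, ∑ x, ψ (t * f (a * x) - f x) = 1 := by
    have h1 : ∑ x, ψ (t * f x) = -1 := by
      simp only [← hσψ]
      rw [← map_sum, hsum, map_neg, map_one]
    rw [Finset.sum_comm]
    simp only [sub_eq_add_neg, AddChar.map_add_eq_mul, ← Finset.sum_mul]
    have h2 : ∀ x, ∑ a, ψ (t * f (a * x)) = -1 := fun x => by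
      rw [← h1]
      exact Fintype.sum_equiv (Equiv.mulRight x) _ _ fun _ => rfl
    simp only [h2]
    rw [← Finset.mul_sum, hsum_neg]
    ring
  obtain ⟨a, ha⟩ : ∃ a, ∑ x, ψ (t * f (a * x) - f x) + 1 ≠ 0 := by
    by_contra! hall
    have hzero : ∑ a : G, (∑ x, ψ (t * f (a * x) - f x) + 1) = 0 :=
      Finset.sum_eq_zero fun a _ => hall a
    rw [Finset.sum_add_distrib, htotal, Finset.sum_const, Finset.card_univ, nsmul_one] at hzero
    have : ((1 + Fintype.card G : ℕ) : O) = 0 := by push_cast; exact hzero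
    rw [Nat.cast_eq_zero] at this
    omega
  refine ⟨a, fun x => ?_⟩
  have := eq_zero_of_card_dvd_sum_zmodChar hω hgen hG (hdvd a) ha x
  exact (sub_eq_zero.1 this).symm

/-- If every nontrivial combination of `u` and `w` takes the value `0` once less often than the
others, then `(u, w)` takes the value `(b, b)` with `b ≠ 0` equally often. -/
lemma card_filter_eq_and_eq {K X : Type*} [Field K] [Fintype K] [DecidableEq K] [Fintype X]
    (u w : X → K) {M : ℕ}
    (hX : Fintype.card X + 1 = Fintype.card K * M)
    (hu : ∀ j, (Finset.card {x | u x = j} + if j = 0 then 1 else 0) = M)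
    (hw : ∀ s j, (Finset.card {x | w x - s * u x = j} + if j = 0 then 1 else 0) = M)
    {b : K} (hb : b ≠ 0) :
    Fintype.card K * Finset.card {x | u x = b ∧ w x = b} = M := by
  have hlines : (∑ s : K, Finset.card {x | w x - s * u x = b - s * b}) + 1 =
      Fintype.card K * M := by
    have h1 : ∑ s : K, (Finset.card {x | w x - s * u x = b - s * b} +
        if s = 1 then 1 else 0) = ∑ _s : K, M := by
      refine Finset.sum_congr rfl fun s _ => ?_
      rw [← hw s (b - s * b)]
      congr 2
      rw [sub_eq_zero, eq_iff_iff, eq_comm (a := b)]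
      exact (mul_eq_right₀ hb).symm
    rw [Finset.sum_add_distrib, Finset.sum_const] at h1
    simpa using h1
  have hswap : ∑ s : K, Finset.card {x | w x - s * u x = b - s * b} =
      ∑ x, Finset.card {s : K | w x - s * u x = b - s * b} := by
    simp only [Finset.card_filter]
    exact Finset.sum_comm
  have hpoint : ∀ x, Finset.card {s : K | w x - s * u x = b - s * b} +
      (if u x = b then 1 else 0) =
      1 + Fintype.card K * if u x = b ∧ w x = b then 1 else 0 := by
    intro x
    by_cases hux : u x = b
    · by_cases hwx : w x = b
      · simp [hux, hwx, add_comm]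
      · simp [hux, hwx]
    · have : ({s : K | w x - s * u x = b - s * b} : Finset K) = {(w x - b) / (u x - b)} := by
        ext s
        have : u x - b ≠ 0 := sub_ne_zero.2 hux
        simp only [Finset.mem_filter, Finset.mem_univ, true_and, Finset.mem_singleton]
        rw [eq_div_iff this]
        constructor <;> intro h <;> linear_combination -h
      simp [hux, this]
  have hsum := Finset.sum_congr (rfl : (Finset.univ : Finset X) = _) fun x _ => hpoint x
  rw [Finset.sum_add_distrib, Finset.sum_add_distrib, ← Finset.mul_sum, ← hswap,
    ← Finset.card_filter, ← Finset.card_filter, Finset.sum_const, Finset.card_univ,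
    smul_eq_mul, mul_one] at hsum
  have hub := hu b
  rw [if_neg hb, add_zero] at hub
  omega

section Balanced

variable {K L : Type*} [Field L] [Fintype L] [DecidableEq K] [DecidableEq L]

lemma card_ne_zero_and_eq (g : L → K) (j : K) :
    Nat.card {x : L | x ≠ 0 ∧ g x = j} =
      Finset.card {u : Lˣ | g u = j} := by
  rw [← Fintype.card_subtype, ← Nat.card_eq_fintype_card]
  refine (Nat.card_congr ⟨fun u => ⟨u.1, u.1.ne_zero, u.2⟩,
    fun x => ⟨Units.mk0 x.1 x.2.1, x.2.2⟩, fun u => ?_, fun x => ?_⟩).symm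
  · ext; rfl
  · ext; rfl

variable [Field K]

lemma IsBalanced.card_units {q n : ℕ} {g : L → K} (h : IsBalanced q n g) (hq : 0 < q) (j : K) :
    (Finset.card {u : Lˣ | g u = j} + if j = 0 then 1 else 0) = q ^ (n - 1) := by
  have hpos : 0 < q ^ (n - 1) := pow_pos hq _
  split_ifs with hj
  · have := h.1
    rw [card_ne_zero_and_eq] at this
    subst hj
    omega
  · rw [← card_ne_zero_and_eq]
    exact h.2 j hj

variable {p n : ℕ} {f : L → K}

lemma IsDiffBalanced.card_units (hdb : IsDiffBalanced p n f) (hp : 0 < p) {a : Lˣ} (ha : a ≠ 1)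
    (j : K) : (Finset.card {u : Lˣ | f ↑(a * u) - f u = j} + if j = 0 then 1 else 0) =
      p ^ (n - 1) :=
  (hdb a a.ne_zero (by simpa using ha)).card_units hp j

lemma IsDiffBalanced.eq_one_of_translate (hdb : IsDiffBalanced p n f) (hp : 0 < p) {a : Lˣ}
    (h : ∀ x : Lˣ, f ↑(a * x) = f x) : a = 1 := by
  by_contra ha
  have h1 := hdb.card_units hp ha 1
  have : 0 < p ^ (n - 1) := pow_pos hp _
  simp only [h, sub_self, zero_ne_one, one_ne_zero, Finset.filter_false, Finset.card_empty,
    if_false] at h1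
  omega

variable [Fintype K]

lemma exists_units_translate_eq_mul (hp : p.Prime) (hK : Fintype.card K = p)
    (hL : Fintype.card L = p ^ n) (hdb : IsDiffBalanced p n f) (hbal : IsBalanced p n f)
    (t : Kˣ) : ∃ a : Lˣ, ∀ x : Lˣ, f ↑(a * x) = t * f x := by
  classical
  have : Fact p.Prime := ⟨hp⟩
  let e : K ≃+* ZMod p := (ZMod.ringEquivOfPrime K hp hK).symm
  have hG : Fintype.card Lˣ + 1 = p ^ n := by
    rw [Fintype.card_units, hL]
    have : 0 < p ^ n := pow_pos hp.pos _
    omega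
  have he : ∀ (y : K) (j : ZMod p), e y = j ↔ y = e.symm j := fun y j => e.eq_symm_apply.symm
  obtain ⟨a, ha⟩ := exists_translate_eq_mul (f := fun u : Lˣ => e (f u)) (M := p ^ (n - 1))
    (t := e (t⁻¹ : Kˣ)) hG
    (fun j => by
      rw [← hbal.card_units hp.pos (e.symm j)]
      simp [he])
    (fun a ha j => by
      rw [← hdb.card_units hp.pos ha (e.symm j)]
      simp [← map_sub, he])
    (by simp)
  refine ⟨a, fun x => ?_⟩
  have h := ha x
  rw [← map_mul, e.injective.eq_iff] at h
  rw [h, Units.mul_inv_cancel_left]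

lemma mem_range_units_iff [Algebra K L] (hp : p.Prime) (hK : Fintype.card K = p)
    (hL : Fintype.card L = p ^ n) (hdb : IsDiffBalanced p n f) (hbal : IsBalanced p n f)
    (a : Lˣ) : a ∈ (Units.map (algebraMap K L).toMonoidHom).range ↔
      ∃ t : Kˣ, ∀ x : Lˣ, f ↑(a * x) = t * f x := by
  classical
  choose φ hφ using exists_units_translate_eq_mul hp hK hL hdb hbal
  obtain ⟨x₀, hx₀⟩ : ∃ x : Lˣ, f x = 1 := by
    have h1 := hbal.card_units hp.pos 1
    have : 0 < p ^ (n - 1) := pow_pos hp.pos _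
    rw [if_neg one_ne_zero, add_zero] at h1
    obtain ⟨x, hx⟩ := Finset.card_pos.1 (h1 ▸ this)
    exact ⟨x, (Finset.mem_filter.1 hx).2⟩
  have hφinj : Function.Injective φ := by
    intro s t hst
    have h := hφ s x₀
    rw [hst, hφ t, hx₀, mul_one, mul_one] at h
    exact Units.ext h.symm
  have hunique : ∀ (a b : Lˣ), (∀ x : Lˣ, f ↑(a * x) = f ↑(b * x)) → a = b := by
    intro a b hab
    rw [← mul_inv_eq_one]
    refine hdb.eq_one_of_translate hp.pos fun x => ?_
    have := hab (b⁻¹ * x)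
    rwa [mul_inv_cancel_left, ← mul_assoc] at this
  have hpow : ∀ (t : Kˣ) (k : ℕ) (x : Lˣ), f ↑(φ t ^ k * x) = (t : K) ^ k * f x := by
    intro t k
    induction k with
    | zero => simp
    | succ k ih =>
      intro x
      rw [pow_succ, mul_assoc, ih, hφ, pow_succ, mul_assoc]
  have hcardK : Fintype.card Kˣ = p - 1 := by rw [Fintype.card_units, hK]
  let S : Finset Lˣ := {a | a ^ (p - 1) = 1}
  have hS : S.card ≤ p - 1 :=
    IsCyclic.card_pow_eq_one_le (Nat.sub_pos_of_lt hp.one_lt)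
  have himage : ∀ g : Kˣ → Lˣ, Function.Injective g → (∀ t, g t ^ (p - 1) = 1) →
      Finset.univ.image g = S := by
    intro g hg hg1
    refine Finset.eq_of_subset_of_card_le ?_ ?_
    · intro a ha
      obtain ⟨t, -, rfl⟩ := Finset.mem_image.1 ha
      simpa [S] using hg1 t
    · rwa [Finset.card_image_of_injective _ hg, Finset.card_univ, hcardK]
  have h₁ := himage φ hφinj fun t => hdb.eq_one_of_translate hp.pos fun x => by
    rw [hpow, ← hcardK, ← Units.val_pow_eq_pow_val, pow_card_eq_one, Units.val_one, one_mul]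
  have h₂ := himage (Units.map (algebraMap K L).toMonoidHom)
    (Units.map_injective (algebraMap K L).injective)
    fun t => by rw [← hcardK, ← map_pow, pow_card_eq_one, map_one]
  have hmem : a ∈ (Units.map (algebraMap K L).toMonoidHom).range ↔ ∃ t, φ t = a := by
    have : a ∈ Finset.univ.image (Units.map (algebraMap K L).toMonoidHom) ↔
        a ∈ Finset.univ.image φ := by rw [h₁, h₂]
    simpa using this
  rw [hmem]
  constructor
  · rintro ⟨t, rfl⟩
    exact ⟨t, hφ t⟩
  · rintro ⟨t, ht⟩
    exact ⟨t, hunique _ _ fun x => by rw [hφ, ht]⟩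

end Balanced

lemma card_mul_inv_eq {G : Type*} [Group G] (D : Set G) (g : G) :
    Nat.card {pq : G × G // pq.1 ∈ D ∧ pq.2 ∈ D ∧ pq.1 * pq.2⁻¹ = g} =
      Nat.card {x : G // x ∈ D ∧ g * x ∈ D} := by
  refine Nat.card_congr ⟨fun pq => ⟨pq.1.2, pq.2.2.1, ?_⟩,
    fun x => ⟨(g * x.1, x.1), x.2.2, x.2.1, by simp⟩, fun pq => ?_, fun x => rfl⟩
  · obtain ⟨⟨a, b⟩, ha, hb, rfl⟩ := pq
    simpa using ha
  · obtain ⟨⟨a, b⟩, ha, hb, rfl⟩ := pq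
    simp

/-- If `f : L∖{0} → 𝔽_p` is difference balanced and balanced, then each nonzero-value
preimage `D_b` is a `((pⁿ−1)/(p−1), p−1, p^{n−1}, p^{n−2})` relative difference set in
`L^×` relative to `K^×`. -/
theorem stmt_15 {K L : Type*} [Field K] [Field L] [Algebra K L] [Fintype K] [Fintype L]
    (p n : ℕ) (hp : p.Prime) (hodd : Odd p) (hn : 2 ≤ n)
    (hK : Fintype.card K = p) (hL : Fintype.card L = p ^ n)
    (f : L → K) (hdb : IsDiffBalanced p n f) (hbal : IsBalanced p n f) :
    ∀ b : K, b ≠ 0 →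
      IsRelDiffSet {u : Lˣ | f (u : L) = b}
        (Units.map (algebraMap K L).toMonoidHom).range
        ((p ^ n - 1) / (p - 1)) (p - 1) (p ^ (n - 1)) (p ^ (n - 2)) := by
  classical
  intro b hb
  have hn0 : n ≠ 0 := by omega
  have hcardL : Fintype.card Lˣ = p ^ n - 1 := by rw [Fintype.card_units, hL]
  have hmem := mem_range_units_iff hp hK hL hdb hbal
  refine ⟨?_, ?_, ?_, fun g hg => ?_, fun g hg hg1 => ?_⟩
  · rw [Nat.card_eq_fintype_card, hcardL, Nat.div_mul_cancel]
    simpa using Nat.sub_dvd_pow_sub_pow p 1 n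
  · rw [← Nat.card_congr (MonoidHom.ofInjective
      (Units.map_injective (algebraMap K L).injective)).toEquiv, Nat.card_eq_fintype_card,
      Fintype.card_units, hK]
  · have h := hbal.card_units hp.pos b
    rw [if_neg hb, add_zero] at h
    rw [← h, ← Fintype.card_subtype, ← Nat.card_eq_fintype_card]
    rfl
  · rw [card_mul_inv_eq]
    have hline : ∀ s j, (Finset.card {x : Lˣ | f ↑(g * x) - s * f x = j} +
        if j = 0 then 1 else 0) = p ^ (n - 1) := by
      intro s j
      by_cases hs : s = 0
      · rw [← hbal.card_units hp.pos j]
        congr 1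
        refine Finset.card_equiv (Equiv.mulLeft g) fun x => ?_
        simp [hs]
      · obtain ⟨a, ha⟩ := exists_units_translate_eq_mul hp hK hL hdb hbal (Units.mk0 s hs)
        have hga : g * a⁻¹ ≠ 1 := by
          rw [Ne, mul_inv_eq_one]
          rintro rfl
          exact hg ((hmem g).2 ⟨_, ha⟩)
        rw [← hdb.card_units hp.pos hga j]
        congr 1
        refine Finset.card_equiv (Equiv.mulLeft a) fun x => ?_
        have hax := ha x
        simp only [Finset.mem_filter, Finset.mem_univ, true_and, Equiv.coe_mulLeft]
        rw [hax, Units.val_mk0, mul_assoc, inv_mul_cancel_left]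
    have hcount := card_filter_eq_and_eq (fun x : Lˣ => f x) (fun x : Lˣ => f ↑(g * x))
      (M := p ^ (n - 1)) (by
        have : 0 < p ^ n := pow_pos hp.pos _
        rw [hcardL, hK, mul_pow_sub_one hn0]
        omega)
      (hbal.card_units hp.pos) hline hb
    rw [hK, ← Fintype.card_subtype, ← Nat.card_eq_fintype_card] at hcount
    refine Nat.eq_of_mul_eq_mul_left hp.pos (hcount.trans ?_)
    rw [← pow_succ']
    congr 1
    omega
  · rw [card_mul_inv_eq]
    obtain ⟨t, ht⟩ := (hmem g).1 hg
    have : IsEmpty {x : Lˣ // x ∈ {u : Lˣ | f u = b} ∧ g * x ∈ {u : Lˣ | f u = b}} := by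
      refine ⟨fun ⟨x, hx, hgx⟩ => hg1 ?_⟩
      have htx := ht x
      rw [Set.mem_ofPred_eq] at hx hgx
      rw [hx, hgx, eq_comm, mul_eq_right₀ hb] at htx
      exact hdb.eq_one_of_translate hp.pos fun y => by rw [ht, htx, one_mul]
    exact Nat.card_of_isEmpty
end

section
/- Let p be an odd prime, q = p^m, and n ≥ 2. Suppose f : L∖{0} → K is surjective onto K, difference balanced, and d-homogeneous. Fix b ∈ K∖{0}, let D_b := {x ∈ L∖{0} : f(x) = b}, and let ρ : L^× → L^×/K^× be the quotient homomorphism, where K^× is the image of K∖{0} in L^×. Then ρ is injective on D_b and ρ(D_b) is a ((q^n−1)/(q−1), q^{n−1}, q^{n−2}(q−1)) difference set in the cyclic group L^×/K^× (a difference set with Singer parameters). -/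
/-- `D ⊆ G` is a `(v, k, λ)` difference set: `|G| = v`, `|D| = k`, and every `g ≠ 1`
has exactly `λ` representations `g = d₁d₂⁻¹` with `d₁, d₂ ∈ D`. -/
def IsDiffSet {G : Type*} [Group G] (D : Set G) (v k lam : ℕ) : Prop :=
  Nat.card G = v ∧ Nat.card D = k ∧
    ∀ g : G, g ≠ 1 →
      Nat.card {pq : G × G // pq.1 ∈ D ∧ pq.2 ∈ D ∧ pq.1 * pq.2⁻¹ = g} = lam

section HomogeneousFunctions

variable {K G : Type*} [Field K] [CommGroup G] {ι : Kˣ →* G} {F : G → K} {d : ℕ}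

lemma exists_pow_mul_eq [Finite K] (hcop : (Nat.card Kˣ).Coprime d) {y b : K} (hy : y ≠ 0)
    (hb : b ≠ 0) : ∃ c : Kˣ, (c : K) ^ d * y = b := by
  obtain ⟨c, hc⟩ := (powCoprime hcop).surjective (Units.mk0 b hb / Units.mk0 y hy)
  refine ⟨c, ?_⟩
  have h := congrArg (Units.val) hc
  simp only [powCoprime_apply, Units.val_pow_eq_pow_val, Units.val_div_eq_div_val,
    Units.val_mk0] at h
  rw [h, div_mul_cancel₀ _ hy]

lemma eq_of_pow_mul_eq_pow_mul [Finite K] (hcop : (Nat.card Kˣ).Coprime d) {y : K} (hy : y ≠ 0)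
    {c c' : Kˣ} (h : (c : K) ^ d * y = (c' : K) ^ d * y) : c = c' := by
  apply (powCoprime hcop).injective
  ext
  simpa using mul_right_cancel₀ hy h

lemma injOn_mk_range_of_homogeneous [Finite K] (hcop : (Nat.card Kˣ).Coprime d)
    (hF : ∀ c u, F (ι c * u) = (c : K) ^ d * F u) {b : K} (hb : b ≠ 0) :
    Set.InjOn (QuotientGroup.mk' ι.range) {u | F u = b} := by
  intro u hu v hv huv
  obtain ⟨z, ⟨c, rfl⟩, hz⟩ := (QuotientGroup.mk'_eq_mk' _).1 huv
  have hz' : ι c * u = v := by rw [mul_comm]; exact hz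
  have h := hF c u
  rw [hz', hv, hu] at h
  have hc : c = 1 := eq_of_pow_mul_eq_pow_mul hcop hb (by simpa using h.symm)
  simpa [hc] using hz'

/-- Representations of the class of `a` as a quotient of two elements of the image of `F ⁻¹ {b}`
correspond to the `u` with `F u = b` and `F (a * u) ≠ 0`. -/
lemma card_quotient_representations [Finite K] (hcop : (Nat.card Kˣ).Coprime d)
    (hF : ∀ c u, F (ι c * u) = (c : K) ^ d * F u) {b : K} (hb : b ≠ 0) (a : G) :
    Nat.card {pq : (G ⧸ ι.range) × (G ⧸ ι.range) //
      pq.1 ∈ QuotientGroup.mk' ι.range '' {u | F u = b} ∧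
      pq.2 ∈ QuotientGroup.mk' ι.range '' {u | F u = b} ∧
      pq.1 * pq.2⁻¹ = QuotientGroup.mk' ι.range a} =
    Nat.card {u : G // F u = b ∧ F (a * u) ≠ 0} := by
  symm
  refine Nat.card_congr (Equiv.ofBijective (fun u => ⟨(QuotientGroup.mk' ι.range (a * u.1),
    QuotientGroup.mk' ι.range u.1), ?_, ⟨u.1, u.2.1, rfl⟩, ?_⟩) ⟨?_, ?_⟩)
  · obtain ⟨c, hc⟩ := exists_pow_mul_eq hcop u.2.2 hb
    refine ⟨ι c * (a * u.1), (hF _ _).trans hc, ?_⟩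
    exact (QuotientGroup.mk'_eq_mk' _).2 ⟨(ι c)⁻¹, inv_mem ⟨c, rfl⟩, by
      rw [mul_comm, inv_mul_cancel_left]⟩
  · simp
  · rintro ⟨u, hu⟩ ⟨v, hv⟩ huv
    simp only [Subtype.mk.injEq, Prod.mk.injEq] at huv
    exact Subtype.ext (injOn_mk_range_of_homogeneous hcop hF hb hu.1 hv.1 huv.2)
  · rintro ⟨⟨x, y⟩, ⟨v, hv, hvx⟩, ⟨u, hu, huy⟩, hxy⟩
    simp only at hvx huy hxy
    have hx : x = QuotientGroup.mk' ι.range (a * u) := by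
      rw [map_mul, huy, ← hxy, inv_mul_cancel_right]
    obtain ⟨z, ⟨c, rfl⟩, hz⟩ := (QuotientGroup.mk'_eq_mk' _).1 (hx.symm.trans hvx.symm)
    refine ⟨⟨u, hu, fun h0 => hb ?_⟩, ?_⟩
    · rw [← show F v = b from hv, ← hz, mul_comm, hF, h0, mul_zero]
    · simp [hx, ← huy]

lemma card_mul_card_fiber [Finite K] (hcop : (Nat.card Kˣ).Coprime d)
    (hF : ∀ c u, F (ι c * u) = (c : K) ^ d * F u) {b : K} (hb : b ≠ 0) (a : G) :
    Nat.card Kˣ * Nat.card {u : G // F u = b ∧ F (a * u) ≠ 0} =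
      Nat.card {u : G // F u ≠ 0 ∧ F (a * u) ≠ 0} := by
  rw [← Nat.card_prod]
  have hFa : ∀ c u, F (a * (ι c * u)) = (c : K) ^ d * F (a * u) := fun c u => by
    rw [mul_left_comm, hF]
  refine Nat.card_congr (Equiv.ofBijective (fun x => ⟨ι x.1 * x.2.1, ?_, ?_⟩) ⟨?_, ?_⟩)
  · rw [hF, x.2.2.1]
    exact mul_ne_zero (pow_ne_zero _ x.1.ne_zero) hb
  · rw [hFa]
    exact mul_ne_zero (pow_ne_zero _ x.1.ne_zero) x.2.2.2
  · rintro ⟨c, u, hu⟩ ⟨c', u', hu'⟩ h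
    simp only [Subtype.mk.injEq] at h
    have h1 := congrArg F h
    rw [hF, hF, hu.1, hu'.1] at h1
    obtain rfl := eq_of_pow_mul_eq_pow_mul hcop hb h1
    obtain rfl := mul_left_cancel h
    rfl
  · rintro ⟨u, hu, hu'⟩
    obtain ⟨c, hc⟩ := exists_pow_mul_eq hcop hu hb
    refine ⟨⟨c⁻¹, ι c * u, (hF _ _).trans hc, ?_⟩, ?_⟩
    · rw [hFa]
      exact mul_ne_zero (pow_ne_zero _ c.ne_zero) hu'
    · simp

open scoped Classical in
lemma sum_card_mul_eq [Fintype K] [Fintype G] (hcop : (Nat.card Kˣ).Coprime d)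
    (hF : ∀ c u, F (ι c * u) = (c : K) ^ d * F u) (a : G) :
    ∑ c : Kˣ, Nat.card {u : G // F (ι c * a * u) = F u} =
      Nat.card Kˣ * Nat.card {u : G // F u = 0 ∧ F (a * u) = 0} +
        Nat.card {u : G // F u ≠ 0 ∧ F (a * u) ≠ 0} := by
  simp only [Nat.card_eq_fintype_card, Fintype.card_subtype, mul_assoc, hF, Finset.card_filter]
  rw [Finset.sum_comm, Finset.mul_sum, ← Finset.sum_add_distrib]
  refine Finset.sum_congr rfl fun u _ => ?_
  rw [← Finset.card_filter]
  by_cases h1 : F u = 0 <;> by_cases h2 : F (a * u) = 0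
  · simp [h1, h2]
  · simp [h1, h2]
  · simp [h1, h2, Ne.symm h1]
  · obtain ⟨c, hc⟩ := exists_pow_mul_eq hcop h2 h1
    simp only [h1, h2, ne_eq, not_false_eq_true, and_self, if_true, if_false, mul_zero, zero_add]
    refine Finset.card_eq_one.2 ⟨c, ?_⟩
    ext c'
    simp only [Finset.mem_filter, Finset.mem_univ, true_and, Finset.mem_singleton]
    exact ⟨fun h => eq_of_pow_mul_eq_pow_mul hcop h2 (h.trans hc.symm), fun h => h ▸ hc⟩

open scoped Classical in
lemma card_add_card_zero_zero [Fintype G] (a : G) :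
    Nat.card G + Nat.card {u : G // F u = 0 ∧ F (a * u) = 0} =
      2 * Nat.card {u : G // F u = 0} + Nat.card {u : G // F u ≠ 0 ∧ F (a * u) ≠ 0} := by
  have hshift : Nat.card {u : G // F (a * u) = 0} = Nat.card {u : G // F u = 0} :=
    Nat.card_congr ((Equiv.mulLeft a).subtypeEquiv fun _ => Iff.rfl)
  rw [two_mul]
  nth_rw 2 [← hshift]
  simp only [Nat.card_eq_fintype_card, Fintype.card_subtype, Finset.card_filter,
    ← Finset.sum_add_distrib]
  rw [← Finset.card_univ, Finset.card_eq_sum_ones, ← Finset.sum_add_distrib]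
  refine Finset.sum_congr rfl fun u _ => ?_
  by_cases h1 : F u = 0 <;> by_cases h2 : F (a * u) = 0 <;> simp [h1, h2]

end HomogeneousFunctions

lemma card_ne_zero_and_eq_card_units {L : Type*} [Field L] (P : L → Prop) :
    Nat.card {x : L | x ≠ 0 ∧ P x} = Nat.card {u : Lˣ // P u} := by
  symm
  refine Nat.card_congr (Equiv.ofBijective (fun u => ⟨u.1, u.1.ne_zero, u.2⟩) ⟨?_, ?_⟩)
  · rintro ⟨u, hu⟩ ⟨v, hv⟩ h
    simpa [Units.ext_iff] using h
  · rintro ⟨x, hx, hP⟩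
    exact ⟨⟨Units.mk0 x hx, hP⟩, rfl⟩

lemma IsDHomogeneous.isBalanced {K L : Type*} [Field K] [Field L] [Algebra K L] [Fintype K]
    {q n d : ℕ} (hcard : Fintype.card K = q) (hq : 2 < q) {f : L → K}
    (hd : IsDHomogeneous q d f) (hdb : IsDiffBalanced q n f) : IsBalanced q n f := by
  have hcop : (Nat.card Kˣ).Coprime d := by
    rw [Nat.card_units, Nat.card_eq_fintype_card, hcard]
    exact hd.1.symm
  obtain ⟨c, hc⟩ : ∃ c : Kˣ, c ≠ 1 := by
    have : Nontrivial Kˣ := by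
      rw [← Finite.one_lt_card_iff_nontrivial, Nat.card_units, Nat.card_eq_fintype_card, hcard]
      omega
    exact exists_ne 1
  have hcd : (c : K) ^ d - 1 ≠ 0 := fun h => hc <|
    eq_of_pow_mul_eq_pow_mul hcop one_ne_zero (by simpa using sub_eq_zero.1 h)
  have hbal := hdb (algebraMap K L c) (by simp)
    (fun h => hc (Units.ext ((algebraMap K L).injective (by simpa using h))))
  have key : ∀ e : K, {x : L | x ≠ 0 ∧ f (algebraMap K L c * x) - f x = ((c : K) ^ d - 1) * e} =
      {x : L | x ≠ 0 ∧ f x = e} := fun e => by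
    ext x
    refine and_congr_right fun hx => ?_
    rw [hd.2 c c.ne_zero x hx, ← sub_one_mul]
    exact mul_right_inj' hcd
  constructor
  · rw [← key 0, mul_zero]
    exact hbal.1
  · intro e he
    rw [← key e]
    exact hbal.2 _ (mul_ne_zero hcd he)

/-- If `f : L∖{0} → K` is surjective, difference balanced and `d`-homogeneous, then for
`b ∈ K∖{0}` the projection of `D_b` to `L^×/K^×` is injective on `D_b` and yields a
difference set with Singer parameters `((qⁿ−1)/(q−1), q^{n−1}, q^{n−2}(q−1))`. -/
theorem stmt_16 {K L : Type*} [Field K] [Field L] [Algebra K L] [Fintype K] [Fintype L]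
    (p m n q : ℕ) (hp : p.Prime) (hodd : Odd p) (hm : 1 ≤ m) (hn : 2 ≤ n)
    (hq : q = p ^ m) (hK : Fintype.card K = q) (hL : Fintype.card L = q ^ n)
    (f : L → K) (hsurj : ∀ b : K, ∃ x : L, x ≠ 0 ∧ f x = b)
    (hdb : IsDiffBalanced q n f) (d : ℕ) (hd : IsDHomogeneous q d f)
    (b : K) (hb : b ≠ 0) :
    Set.InjOn (QuotientGroup.mk' (Units.map (algebraMap K L).toMonoidHom).range)
        {u : Lˣ | f (u : L) = b} ∧
      IsDiffSet
        ((QuotientGroup.mk' (Units.map (algebraMap K L).toMonoidHom).range) ''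
          {u : Lˣ | f (u : L) = b})
        ((q ^ n - 1) / (q - 1)) (q ^ (n - 1)) (q ^ (n - 2) * (q - 1)) := by
  classical
  have hq2 : 2 < q := by
    have hp2 : 2 < p := hp.two_le.lt_of_ne fun h => by
      rw [← h] at hodd
      exact absurd hodd (by decide)
    exact hq ▸ hp2.trans_le (Nat.le_self_pow (by omega) p)
  have hcardK : Nat.card Kˣ = q - 1 := by
    rw [Nat.card_units, Nat.card_eq_fintype_card, hK]
  have hcardL : Nat.card Lˣ = q ^ n - 1 := by
    rw [Nat.card_units, Nat.card_eq_fintype_card, hL]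
  have hcop : (Nat.card Kˣ).Coprime d := hcardK ▸ hd.1.symm
  have hbal := hd.isBalanced hK hq2 hdb
  set ι : Kˣ →* Lˣ := Units.map (algebraMap K L).toMonoidHom
  have hF : ∀ (c : Kˣ) (u : Lˣ), f ((ι c * u : Lˣ) : L) = (c : K) ^ d * f u := fun c u =>
    hd.2 c c.ne_zero u u.ne_zero
  have hinj : Set.InjOn (QuotientGroup.mk' ι.range) {u : Lˣ | f (u : L) = b} :=
    injOn_mk_range_of_homogeneous (F := fun u : Lˣ => f u) hcop hF hb
  refine ⟨hinj, ?_, ?_, ?_⟩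
  · have hι : Function.Injective ι := Units.map_injective (algebraMap K L).injective
    have hrange : Nat.card ι.range = q - 1 := by
      rw [← hcardK, Nat.card_congr (MonoidHom.ofInjective hι).toEquiv]
    have h := ι.range.card_eq_card_quotient_mul_card_subgroup
    rw [hcardL, hrange] at h
    rw [h, Nat.mul_div_cancel _ (by omega)]
  · rw [Nat.card_image_of_injOn hinj, ← hbal.2 b hb, card_ne_zero_and_eq_card_units]
    rfl
  · intro g hg
    obtain ⟨a, rfl⟩ := QuotientGroup.mk'_surjective _ g
    have ha : ∀ c : Kˣ, ι c * a ≠ 1 := fun c h => hg <|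
      (QuotientGroup.eq_one_iff a).2 ⟨c⁻¹, by rw [map_inv, inv_eq_of_mul_eq_one_right h]⟩
    rw [card_quotient_representations (F := fun u : Lˣ => f u) hcop hF hb a]
    have hfiber := card_mul_card_fiber (F := fun u : Lˣ => f u) hcop hF hb a
    have hsum := sum_card_mul_eq (F := fun u : Lˣ => f u) hcop hF a
    have hincl := card_add_card_zero_zero (F := fun u : Lˣ => f u) a
    have hdiff : ∀ c : Kˣ, Nat.card {u : Lˣ // f ((ι c * a * u : Lˣ) : L) = f u} =
        q ^ (n - 1) - 1 := fun c => by
      have h := (hdb (ι c * a : Lˣ) (Units.ne_zero _) (Units.val_eq_one.not.2 (ha c))).1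
      rw [card_ne_zero_and_eq_card_units] at h
      simpa [sub_eq_zero] using h
    have hzero : Nat.card {u : Lˣ // f u = 0} = q ^ (n - 1) - 1 := by
      rw [← hbal.1, card_ne_zero_and_eq_card_units]
    simp only [hdiff, Finset.sum_const, Finset.card_univ, smul_eq_mul,
      ← Nat.card_eq_fintype_card, hcardK] at hsum
    rw [hzero, hcardL] at hincl
    rw [hcardK] at hfiber
    rw [← hfiber] at hsum hincl
    generalize Nat.card {u : Lˣ // f u = b ∧ f ((a * u : Lˣ) : L) ≠ 0} = A at *
    generalize Nat.card {u : Lˣ // f u = 0 ∧ f ((a * u : Lˣ) : L) = 0} = Z at *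
    obtain ⟨k, rfl⟩ := Nat.exists_eq_add_of_le' hn
    obtain ⟨r, rfl⟩ : ∃ r, q = r + 1 := ⟨q - 1, by omega⟩
    have h1 : 1 ≤ (r + 1) ^ (k + 1) := Nat.one_le_pow _ _ (by omega)
    have h2 : 1 ≤ (r + 1) ^ (k + 2) := Nat.one_le_pow _ _ (by omega)
    simp only [Nat.add_sub_cancel, show k + 2 - 1 = k + 1 by omega] at *
    zify [h1, h2] at *
    have hr : (r : ℤ) ≠ 0 := by omega
    have hsum' : ((r : ℤ) + 1) ^ (k + 1) - 1 = Z + A :=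
      mul_left_cancel₀ hr (by rw [hsum]; ring)
    have hr1 : (r : ℤ) + 1 ≠ 0 := by omega
    refine mul_left_cancel₀ hr1 ?_
    rw [pow_succ, pow_succ] at hincl
    rw [pow_succ] at hsum'
    linear_combination -hincl - hsum'
end

section
/- Let p be an odd prime, q = p^m, and n ≥ 1. A function f : L∖{0} → K is difference balanced if and only if its graph D := {(x, f(x)) : x ∈ L∖{0}}, viewed in the group G = L^× × K with operation (x, y)(x', y') = (xx', y + y'), is a generalized difference set with parameters (q(q^n−1); q, q^n−1; q^n−1, q^{n−1}; 0, q^{n−1}−1) relative to N₁ = {1} × K and N₂ = L^× × {0}. Explicitly: f is difference balanced if and only if for all a ∈ L∖{0} and b ∈ K, the number of ordered pairs (x, y) ∈ (L∖{0})² with x·y⁻¹ = a and f(x) − f(y) = b equals q^{n−1} when a ≠ 1 and b ≠ 0, equals q^{n−1} − 1 when a ≠ 1 and b = 0, and equals 0 when a = 1 and b ≠ 0. -/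
/-- The number of ordered pairs `(x, y)` of nonzero elements of `L` with
`x·y⁻¹ = a` and `f(x) − f(y) = b`. -/
noncomputable def graphDiffCount {K L : Type*} [Field K] [Field L]
    (f : L → K) (a : L) (b : K) : ℕ :=
  Nat.card {xy : L × L | xy.1 ≠ 0 ∧ xy.2 ≠ 0 ∧ xy.1 * xy.2⁻¹ = a ∧ f xy.1 - f xy.2 = b}

/-- Pairs of nonzero elements with quotient `a ≠ 0` are of the form `(a * y, y)`, so the difference
count of the graph of `f` is a fibre size of `y ↦ f (a * y) - f y`. -/
lemma graphDiffCount_eq_card {K L : Type*} [Field K] [Field L] (f : L → K) {a : L} (ha : a ≠ 0)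
    (b : K) : graphDiffCount f a b = Nat.card {x : L | x ≠ 0 ∧ f (a * x) - f x = b} := by
  refine Nat.card_congr
    { toFun := fun z => ⟨z.1.2, ?_⟩
      invFun := fun y => ⟨(a * y.1, y.1), mul_ne_zero ha y.2.1, y.2.1, ?_, y.2.2⟩
      left_inv := ?_
      right_inv := fun y => rfl }
  · obtain ⟨⟨x, y⟩, -, hy, rfl, hb⟩ := z
    exact ⟨hy, by simpa [hy] using hb⟩
  · exact mul_inv_cancel_right₀ y.2.1 a
  · rintro ⟨⟨x, y⟩, -, hy, rfl, -⟩
    simp [show y ≠ 0 from hy]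

lemma graphDiffCount_one {K L : Type*} [Field K] [Field L] (f : L → K) {b : K} (hb : b ≠ 0) :
    graphDiffCount f 1 b = 0 := by
  simp [graphDiffCount_eq_card f one_ne_zero, hb.symm]

/-- `f` is difference balanced if and only if its graph is a generalized difference set
with parameters `(q(qⁿ−1); q, qⁿ−1; qⁿ−1, q^{n−1}; 0, q^{n−1}−1)` relative to
`N₁ = {1} × K` and `N₂ = L^× × {0}`; explicitly, the number of ordered pairs of
nonzero `(x, y)` with `x·y⁻¹ = a`, `f(x) − f(y) = b` equals `q^{n−1}` for `a ≠ 1`,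
`b ≠ 0`; equals `q^{n−1} − 1` for `a ≠ 1`, `b = 0`; and equals `0` for `a = 1`,
`b ≠ 0`. -/
theorem stmt_18 {K L : Type*} [Field K] [Field L] [Algebra K L] [Fintype K] [Fintype L]
    (p m n q : ℕ) (hp : p.Prime) (hodd : Odd p) (hm : 1 ≤ m) (hn : 1 ≤ n)
    (hq : q = p ^ m) (hK : Fintype.card K = q) (hL : Fintype.card L = q ^ n)
    (f : L → K) :
    IsDiffBalanced q n f ↔
      ((∀ a : L, a ≠ 0 → a ≠ 1 → ∀ b : K, b ≠ 0 →
          graphDiffCount f a b = q ^ (n - 1)) ∧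
        (∀ a : L, a ≠ 0 → a ≠ 1 → graphDiffCount f a 0 = q ^ (n - 1) - 1) ∧
        (∀ b : K, b ≠ 0 → graphDiffCount f 1 b = 0)) := by
  constructor
  · intro h
    refine ⟨fun a ha ha' b hb => ?_, fun a ha ha' => ?_, fun b hb => graphDiffCount_one f hb⟩
    · rw [graphDiffCount_eq_card f ha]
      exact (h a ha ha').2 b hb
    · rw [graphDiffCount_eq_card f ha]
      exact (h a ha ha').1
  · rintro ⟨hne, hzero, -⟩ a ha ha'
    refine ⟨?_, fun b hb => ?_⟩
    · rw [← graphDiffCount_eq_card f ha]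
      exact hzero a ha ha'
    · rw [← graphDiffCount_eq_card f ha]
      exact hne a ha ha' b hb
end

section
/- Let G be a finite abelian group of order v with subgroups N₁ and N₂ of orders n₁ and n₂ satisfying N₁ ∩ N₂ = {1}, and let D ⊆ G be a (v; n₁, n₂; k, λ; 0, 0) generalized difference set relative to N₁ and N₂. Let H ≤ N₁ be a subgroup of order m and let ρ : G → G/H be the quotient homomorphism. Then ρ is injective on D, and ρ(D) is a (v/m; n₁/m, n₂; k, mλ; 0, λ(m−1)) generalized difference set in G/H relative to the subgroups N₁/H and ρ(N₂). -/
/-- The number of representations of `g` as a difference `d₁d₂⁻¹` of two distinct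
elements of `D`. -/
noncomputable def gdsDiffCount {G : Type*} [Group G] (D : Set G) (g : G) : ℕ :=
  Nat.card {pq : G × G // pq.1 ∈ D ∧ pq.2 ∈ D ∧ pq.1 ≠ pq.2 ∧ pq.1 * pq.2⁻¹ = g}

/-- `D ⊆ G` is a `(v; n₁, n₂; k, λ; λ₁, λ₂)` generalized difference set relative to
subgroups `N₁`, `N₂`: `|G| = v`, `|N₁| = n₁`, `|N₂| = n₂`, `|D| = k`, every
`g ∉ N₁ ∪ N₂` has exactly `λ` representations as a difference of distinct elements
of `D`, every `g ∈ N₁∖{1}` exactly `λ₁`, and every `g ∈ N₂∖{1}` exactly `λ₂`. -/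
def IsGenDiffSet {G : Type*} [Group G] (D : Set G) (N₁ N₂ : Subgroup G)
    (v n₁ n₂ k lam l₁ l₂ : ℕ) : Prop :=
  Nat.card G = v ∧ Nat.card N₁ = n₁ ∧ Nat.card N₂ = n₂ ∧ Nat.card D = k ∧
    (∀ g : G, g ∉ N₁ → g ∉ N₂ → gdsDiffCount D g = lam) ∧
    (∀ g : G, g ∈ N₁ → g ≠ 1 → gdsDiffCount D g = l₁) ∧
    (∀ g : G, g ∈ N₂ → g ≠ 1 → gdsDiffCount D g = l₂)

/-- If the quotient map is injective on `D`, the number of representations of a coset by the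
image of `D` is the sum of the numbers of representations of its elements by `D`. -/
theorem gdsDiffCount_image_mk' {G : Type*} [CommGroup G] [Finite G] (D : Set G)
    (H : Subgroup G) [Fintype H] (hinj : Set.InjOn (QuotientGroup.mk' H) D) (x : G) :
    gdsDiffCount (QuotientGroup.mk' H '' D) (QuotientGroup.mk' H x) =
      ∑ h : H, gdsDiffCount D (x * h) := by
  unfold gdsDiffCount
  rw [← Nat.card_sigma]
  symm
  let f : (Σ h : H, {pq : G × G //
        pq.1 ∈ D ∧ pq.2 ∈ D ∧ pq.1 ≠ pq.2 ∧ pq.1 * pq.2⁻¹ = x * h}) →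
      {pq : (G ⧸ H) × (G ⧸ H) //
        pq.1 ∈ QuotientGroup.mk' H '' D ∧ pq.2 ∈ QuotientGroup.mk' H '' D ∧ pq.1 ≠ pq.2 ∧
          pq.1 * pq.2⁻¹ = QuotientGroup.mk' H x} := fun y =>
    ⟨(QuotientGroup.mk' H y.2.1.1, QuotientGroup.mk' H y.2.1.2),
      ⟨_, y.2.2.1, rfl⟩, ⟨_, y.2.2.2.1, rfl⟩,
      fun e => y.2.2.2.2.1 (hinj y.2.2.1 y.2.2.2.1 e), by
        rw [← map_inv, ← map_mul, y.2.2.2.2.2, map_mul]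
        simp⟩
  refine Nat.card_congr (Equiv.ofBijective f ⟨?_, ?_⟩)
  · rintro ⟨h, ⟨p, q⟩, hp, hq, hpq, e⟩ ⟨h', ⟨p', q'⟩, hp', hq', hpq', e'⟩ hf
    have hf' := congrArg Subtype.val hf
    obtain rfl : p = p' := hinj hp hp' (congrArg Prod.fst hf')
    obtain rfl : q = q' := hinj hq hq' (congrArg Prod.snd hf')
    obtain rfl : h = h' := Subtype.ext (mul_left_cancel (e.symm.trans e'))
    rfl
  · rintro ⟨⟨a, b⟩, ha, hb, hpq, e⟩
    obtain ⟨⟨p, hp, hpa : _ = a⟩, ⟨q, hq, hqb : _ = b⟩⟩ := And.intro ha hb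
    subst hpa hqb
    have hmem : x⁻¹ * (p * q⁻¹) ∈ H := by
      rw [← QuotientGroup.eq]
      exact e.symm
    exact ⟨⟨⟨_, hmem⟩, ⟨(p, q), hp, hq, fun hne => hpq (congrArg _ hne), by simp⟩⟩, rfl⟩

/-- A pair of distinct elements of `D` witnesses that its quotient is represented. -/
theorem gdsDiffCount_ne_zero {G : Type*} [Group G] [Finite G] {D : Set G} {p q : G}
    (hp : p ∈ D) (hq : q ∈ D) (hpq : p ≠ q) : gdsDiffCount D (p * q⁻¹) ≠ 0 := by
  unfold gdsDiffCount
  have : Nonempty {pq : G × G //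
      pq.1 ∈ D ∧ pq.2 ∈ D ∧ pq.1 ≠ pq.2 ∧ pq.1 * pq.2⁻¹ = p * q⁻¹} :=
    ⟨⟨(p, q), hp, hq, hpq, rfl⟩⟩
  exact Nat.card_pos.ne'

/-- The image in `G ⧸ H` of a subgroup `K` containing `H` has order `|K| / |H|`. -/
theorem card_map_mk'_of_le {G : Type*} [CommGroup G] [Finite G] {H K : Subgroup G}
    (hHK : H ≤ K) :
    Nat.card (K.map (QuotientGroup.mk' H)) = Nat.card K / Nat.card H := by
  rw [← Subgroup.relIndex_ker, QuotientGroup.ker_mk']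
  have h := Subgroup.relIndex_mul_relIndex ⊥ H K bot_le hHK
  rw [Subgroup.relIndex_bot_left, Subgroup.relIndex_bot_left] at h
  exact (Nat.div_eq_of_eq_mul_right Nat.card_pos h.symm).symm

/-- Projection of a generalized difference set with two exceptional subgroups and
`λ₁ = λ₂ = 0` along a subgroup `H ≤ N₁` of order `m`: the quotient map is injective
on `D` and the image is a `(v/m; n₁/m, n₂; k, mλ; 0, λ(m−1))` generalized difference
set relative to `N₁/H` and the image of `N₂`. -/
theorem stmt_19 {G : Type*} [CommGroup G] [Finite G]
    (D : Set G) (N₁ N₂ H : Subgroup G) (hH : H ≤ N₁) (htriv : N₁ ⊓ N₂ = ⊥)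
    (v n₁ n₂ k lam m : ℕ) (hm : Nat.card H = m)
    (hD : IsGenDiffSet D N₁ N₂ v n₁ n₂ k lam 0 0) :
    Set.InjOn (QuotientGroup.mk' H) D ∧
      IsGenDiffSet ((QuotientGroup.mk' H) '' D)
        (N₁.map (QuotientGroup.mk' H)) (N₂.map (QuotientGroup.mk' H))
        (v / m) (n₁ / m) n₂ k (m * lam) 0 (lam * (m - 1)) := by
  classical
  have := Fintype.ofFinite H
  obtain ⟨hv, hn₁, hn₂, hk, hlam, h₁, h₂⟩ := hD
  have hdisj : ∀ g ∈ N₁, g ∈ N₂ → g = 1 := fun g hg hg' =>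
    Subgroup.mem_bot.1 (htriv ▸ Subgroup.mem_inf.2 ⟨hg, hg'⟩)
  have hinj : Set.InjOn (QuotientGroup.mk' H) D := by
    intro p hp q hq e
    by_contra hpq
    have hmem : p * q⁻¹ ∈ H := by
      have := QuotientGroup.eq.1 (e.symm : (q : G ⧸ H) = p)
      rwa [mul_comm] at this
    exact gdsDiffCount_ne_zero hp hq hpq
      (h₁ _ (hH hmem) fun h => hpq (mul_inv_eq_one.1 h))
  refine ⟨hinj, ?_, ?_, ?_, ?_, ?_, ?_, ?_⟩
  · have h := H.card_eq_card_quotient_mul_card_subgroup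
    rw [hv, hm] at h
    exact (Nat.div_eq_of_eq_mul_left (hm ▸ Nat.card_pos) h).symm
  · rw [card_map_mk'_of_le hH, hn₁, hm]
  · rw [← hn₂, ← Subgroup.relIndex_ker, QuotientGroup.ker_mk', ← Subgroup.relIndex_bot_left,
      ← Subgroup.inf_relIndex_right]
    congr 1
    exact eq_bot_iff.2 fun g hg => hdisj g (hH hg.1) hg.2
  · rw [← hk]
    exact Nat.card_image_of_injOn hinj
  · intro g hg₁ hg₂
    obtain ⟨x, rfl⟩ := QuotientGroup.mk'_surjective H g
    have hx : ∀ h : H, QuotientGroup.mk' H (x * h) = QuotientGroup.mk' H x := by simp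
    rw [gdsDiffCount_image_mk' D H hinj, Finset.sum_congr rfl fun (h : H) _ =>
      hlam (x * h) (fun hmem => hg₁ ⟨_, hmem, hx h⟩) (fun hmem => hg₂ ⟨_, hmem, hx h⟩)]
    simp [← hm, Nat.card_eq_fintype_card]
  · rintro _ ⟨x, hx, rfl⟩ hne
    rw [gdsDiffCount_image_mk' D H hinj]
    refine Finset.sum_eq_zero fun h _ => h₁ _ (N₁.mul_mem hx (hH h.2)) fun h1 => hne ?_
    rw [eq_inv_of_mul_eq_one_left h1]
    simp
  · rintro _ ⟨x, hx, rfl⟩ hne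
    have hx1 : x ≠ 1 := fun h => hne (by rw [h, map_one])
    rw [gdsDiffCount_image_mk' D H hinj, ← Finset.add_sum_erase _ _ (Finset.mem_univ (1 : H)),
      Finset.sum_congr rfl fun (h : H) hh => hlam (x * h)
        (fun hmem => hx1 (hdisj x ((N₁.mul_mem_cancel_right (hH h.2)).1 hmem) hx))
        (fun hmem => Finset.ne_of_mem_erase hh
          (Subtype.ext (hdisj h (hH h.2) ((N₂.mul_mem_cancel_left hx).1 hmem))))]
    simp [h₂ x hx hx1, ← hm, Nat.card_eq_fintype_card, mul_comm]
end
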